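/- arXiv:1706.01281 — 5 statements merged into one kernel-verified Lean document; each statement's English description precedes it below -/
import Mathlib

section
/- Let d ≥ 2. For all n, m ∈ S^{d-1}, it holds ∫_{SO(d)} ‖F(Rn) − F(Rm)‖_{ℝ^d} dμ(R) ≤ (1 + 2/π) · (1/√2)·‖n⊗n − m⊗m‖, where ‖n⊗n − m⊗m‖ is the Frobenius norm of the d×d matrix n⊗n − m⊗m. -/
noncomputable section
open MeasureTheory Real Filter
open scoped ENNReal RealInnerProductSpace

instance {m n : Type*} : MeasurableSpace (Matrix m n ℝ) := MeasurableSpace.pi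

/-- The special orthogonal group `SO(d)` as matrices. -/
abbrev SOd (d : ℕ) := Matrix.specialOrthogonalGroup (Fin d) ℝ

/-- The last coordinate `⟪x, e_d⟫` of a vector `x ∈ ℝ^d`. -/
def lastCoord {d : ℕ} (x : EuclideanSpace ℝ (Fin d)) : ℝ :=
  if h : 0 < d then x ⟨d - 1, Nat.sub_lt h Nat.one_pos⟩ else 0

/-- `F : S^{d-1} → S^{d-1}`, `F(x) = x` if `⟪x, e_d⟫ ≥ 0` and `F(x) = -x` otherwise. -/
def Fsym {d : ℕ} (x : EuclideanSpace ℝ (Fin d)) : EuclideanSpace ℝ (Fin d)  :=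
  if 0 ≤ lastCoord x then x else -x

/-- Action of a matrix on `ℝ^d` (Euclidean space) by matrix-vector multiplication. -/
def rotAct {d : ℕ} (R : Matrix (Fin d) (Fin d) ℝ) (x : EuclideanSpace ℝ (Fin d)) :
    EuclideanSpace ℝ (Fin d) :=
  (EuclideanSpace.equiv (Fin d) ℝ).symm (R.mulVec (EuclideanSpace.equiv (Fin d) ℝ x))

/-- Action of `R ∈ SO(d)` on `ℝ^d`. -/
def rot {d : ℕ} (R : SOd d) (x : EuclideanSpace ℝ (Fin d)) : EuclideanSpace ℝ (Fin d) :=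
  rotAct (R : Matrix (Fin d) (Fin d) ℝ) x

/-- The Frobenius (Euclidean) norm of a `d × d` real matrix. -/
def frobNorm {d : ℕ} (A : Fin d → Fin d → ℝ) : ℝ := Real.sqrt (∑ i, ∑ j, (A i j) ^ 2)

/-- The tensor (outer) product `v ⊗ w` of two vectors, as a `d × d` matrix. -/
def outer {d : ℕ} (v w : EuclideanSpace ℝ (Fin d)) : Fin d → Fin d → ℝ := fun i j => v i * w j

/-!
STATEMENT 7: the jump estimate (estim:jump) of Theorem 4.1 with the optimal constant
C^j = 1 + 2/π of the tensorial embedding: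
∫ ‖F(Rn) − F(Rm)‖ dμ(R) ≤ (1 + 2/π)·(1/√2)·‖n⊗n − m⊗m‖.
-/

/-!
Put `ξ = R⁻¹ e_d`. As `R` is an isometry, `‖F(Rn) - F(Rm)‖` is `‖n + m‖` if the hyperplane `ξ^⊥`
separates `n` from `m`, and `‖n - m‖` otherwise. The law of `ξ` is rotation invariant, hence so is
the law of its projection to the plane of `n` and `m`; averaging over the circle orbits in this
plane, the separation has probability `θ / π`, where `θ` is the angle between `n` and `m`.
The integral is thus `2 ((1 - θ / π) sin (θ / 2) + (θ / π) cos (θ / 2))`, which is at most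
`(1 + 2 / π) sin θ`, and `√2 sin θ` is the Frobenius norm of `n ⊗ n - m ⊗ m`.
-/

section Trigonometry

-- Squaring reduces this to `(π / 2 + 1)² c² (1 - c) ≤ 1 + c` for `c = cos t`.
lemma mul_cos_mul_one_sub_cos_le_sin {t : ℝ} (h₀ : 0 ≤ t) (h₁ : t ≤ π / 2) :
    (π / 2 + 1) * (cos t * (1 - cos t)) ≤ sin t := by
  have hc : 0 ≤ cos t := cos_nonneg_of_neg_pi_div_two_le_of_le (by linarith) h₁
  have hs : 0 ≤ sin t := sin_nonneg_of_nonneg_of_le_pi h₀ (by linarith [pi_pos])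
  have hk : (π / 2 + 1) ^ 2 ≤ 20 / 3 := by nlinarith [pi_lt_d2, pi_pos]
  have hcubic : 20 / 3 * (cos t ^ 2 * (1 - cos t)) ≤ 1 + cos t := by
    nlinarith [mul_nonneg hc (sq_nonneg (3 * cos t - 2)), sq_nonneg (3 * cos t - 2)]
  refine (abs_le_of_sq_le_sq' ?_ hs).2
  calc ((π / 2 + 1) * (cos t * (1 - cos t))) ^ 2
      = (1 - cos t) * ((π / 2 + 1) ^ 2 * (cos t ^ 2 * (1 - cos t))) := by ring
    _ ≤ (1 - cos t) * (20 / 3 * (cos t ^ 2 * (1 - cos t))) := by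
        have := sub_nonneg.2 (cos_le_one t)
        gcongr
    _ ≤ (1 - cos t) * (1 + cos t) :=
        mul_le_mul_of_nonneg_left hcubic (sub_nonneg.2 (cos_le_one t))
    _ = sin t ^ 2 := by rw [sin_sq]; ring

lemma convex_combination_sin_cos_le_of_le_pi_div_four {t : ℝ} (h₀ : 0 ≤ t) (h₁ : t ≤ π / 4) :
    (1 - 2 * t / π) * sin t + 2 * t / π * cos t ≤ (1 + 2 / π) * (sin t * cos t) := by
  have hπ := pi_pos
  have hc : 0 < cos t := cos_pos_of_mem_Ioo ⟨by linarith, by linarith⟩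
  have hs : 0 ≤ sin t := sin_nonneg_of_nonneg_of_le_pi h₀ (by linarith)
  have hsc : sin t ≤ cos t := by
    rw [← cos_pi_div_two_sub]
    exact cos_le_cos_of_nonneg_of_le_pi h₀ (by linarith) (by linarith)
  have htan : t * cos t ≤ sin t := by
    have := le_tan h₀ (by linarith)
    rwa [tan_eq_sin_div_cos, le_div_iff₀ hc] at this
  have hcos := mul_cos_mul_one_sub_cos_le_sin h₀ (by linarith)
  have key : π / 2 * (sin t * (1 - cos t)) + t * (cos t - sin t) ≤ sin t * cos t := by
    refine le_of_mul_le_mul_left ?_ hc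
    calc cos t * (π / 2 * (sin t * (1 - cos t)) + t * (cos t - sin t))
        = π / 2 * (sin t * (cos t * (1 - cos t))) + t * cos t * (cos t - sin t) := by ring
      _ ≤ π / 2 * (sin t * (cos t * (1 - cos t))) + sin t * (cos t - sin t) := by
          have := sub_nonneg.2 hsc
          gcongr
      _ = sin t * ((π / 2 + 1) * (cos t * (1 - cos t))) + sin t * (cos t ^ 2 - sin t) := by ring
      _ ≤ sin t * sin t + sin t * (cos t ^ 2 - sin t) := by gcongr
      _ = cos t * (sin t * cos t) := by ring
  have hdiff : (1 + 2 / π) * (sin t * cos t) - ((1 - 2 * t / π) * sin t + 2 * t / π * cos t) =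
      2 / π * (sin t * cos t - (π / 2 * (sin t * (1 - cos t)) + t * (cos t - sin t))) := by
    field_simp
    ring
  rw [← sub_nonneg, hdiff]
  exact mul_nonneg (by positivity) (sub_nonneg.2 key)

lemma convex_combination_sin_cos_le {t : ℝ} (h₀ : 0 ≤ t) (h₁ : t ≤ π / 2) :
    (1 - 2 * t / π) * sin t + 2 * t / π * cos t ≤ (1 + 2 / π) * (sin t * cos t) := by
  rcases le_total t (π / 4) with ht | ht
  · exact convex_combination_sin_cos_le_of_le_pi_div_four h₀ ht
  · have h := convex_combination_sin_cos_le_of_le_pi_div_four (t := π / 2 - t)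
      (by linarith) (by linarith)
    have hcoeff : 2 * (π / 2 - t) / π = 1 - 2 * t / π := by
      field_simp
    rw [sin_pi_div_two_sub, cos_pi_div_two_sub, hcoeff] at h
    linarith

end Trigonometry

section SignChanges

lemma volume_inter_Ioc_add_eq_of_periodic {T : ℝ} (hT : 0 < T) {A : Set ℝ}
    (hA : MeasurableSet A) (hper : Function.Periodic (· ∈ A) T) (a b : ℝ) :
    volume (A ∩ Set.Ioc a (a + T)) = volume (A ∩ Set.Ioc b (b + T)) := by
  refine (isAddFundamentalDomain_Ioc hT a volume).measure_set_eq
    (isAddFundamentalDomain_Ioc hT b volume) hA ?_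
  rintro ⟨g, hg⟩
  obtain ⟨k, rfl⟩ := AddSubgroup.mem_zmultiples_iff.1 hg
  ext x
  simp only [Set.mem_preimage, AddSubgroup.vadd_def, vadd_eq_add, add_comm _ x]
  exact iff_of_eq (hper.zsmul k x)

lemma volume_cos_mul_cos_neg {θ : ℝ} (h₀ : 0 ≤ θ) (h₁ : θ ≤ π) (α : ℝ) :
    volume ({t | cos (t + α) * cos (t + α - θ) < 0} ∩ Set.Ioc 0 π) = ENNReal.ofReal θ := by
  set A := {t | cos (t + α) * cos (t + α - θ) < 0} with hA
  have hmeas : MeasurableSet A := measurableSet_lt (by fun_prop) measurable_const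
  have hper : Function.Periodic (· ∈ A) π := fun t => by
    simp only [hA, Set.mem_ofPred_eq, add_right_comm t π α, add_sub_right_comm _ π θ,
      cos_add_pi, neg_mul_neg]
  have hsector : A ∩ Set.Ioc (-(π / 2) - α) (-(π / 2) - α + π) =
      Set.Ioo (-(π / 2) - α) (-(π / 2) - α + θ) := by
    ext t
    simp only [hA, Set.mem_inter_iff, Set.mem_ofPred_eq, Set.mem_Ioc, Set.mem_Ioo]
    constructor
    · rintro ⟨hneg, hlo, hhi⟩
      refine ⟨hlo, ?_⟩
      by_contra! hge
      have h1 : 0 ≤ cos (t + α) :=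
        cos_nonneg_of_neg_pi_div_two_le_of_le (by linarith) (by linarith)
      have h2 : 0 ≤ cos (t + α - θ) :=
        cos_nonneg_of_neg_pi_div_two_le_of_le (by linarith) (by linarith)
      exact hneg.not_ge (mul_nonneg h1 h2)
    · rintro ⟨hlo, hhi⟩
      have h1 : 0 < cos (t + α) := cos_pos_of_mem_Ioo ⟨by linarith, by linarith⟩
      have h2 : cos (t + α - θ) < 0 := by
        rw [← cos_neg]
        exact cos_neg_of_pi_div_two_lt_of_lt (by linarith) (by linarith)
      exact ⟨mul_neg_of_pos_of_neg h1 h2, hlo, by linarith⟩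
  have hshift := volume_inter_Ioc_add_eq_of_periodic pi_pos hmeas hper 0 (-(π / 2) - α)
  rw [zero_add] at hshift
  rw [hshift, hsector, volume_Ioo, add_sub_cancel_left]

lemma volume_cos_add_eq_zero (α : ℝ) : volume {t | cos (t + α) = 0} = 0 := by
  refine measure_mono_null (t := Set.range fun k : ℤ => (2 * k + 1) * π / 2 - α) ?_
    ((Set.countable_range _).measure_zero _)
  intro t ht
  obtain ⟨k, hk⟩ := cos_eq_zero_iff.1 ht
  exact ⟨k, sub_eq_of_eq_add hk.symm⟩

end SignChanges

lemma lintegral_measure_orbit_mem {α ι : Type*} [MeasurableSpace α] [MeasurableSpace ι]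
    (ρ : Measure α) [SFinite ρ] (τ : Measure ι) [SFinite τ] {T : ι → α → α}
    (hT : Measurable (Function.uncurry T)) (hρ : ∀ i, MeasurePreserving (T i) ρ ρ)
    {S : Set α} (hS : MeasurableSet S) :
    ∫⁻ x, τ {i | T i x ∈ S} ∂ρ = ρ S * τ Set.univ := by
  have hpre : MeasurableSet (Function.uncurry T ⁻¹' S) := hT hS
  calc ∫⁻ x, τ {i | T i x ∈ S} ∂ρ = τ.prod ρ (Function.uncurry T ⁻¹' S) :=
        (Measure.prod_apply_symm hpre).symm
    _ = ∫⁻ i, ρ (T i ⁻¹' S) ∂τ := Measure.prod_apply hpre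
    _ = ρ S * τ Set.univ := by
        simp only [(hρ _).measure_preimage hS.nullMeasurableSet, lintegral_const]

section CircleInvariant

lemma re_circle_exp_smul (t : ℝ) (z : ℂ) : (Circle.exp t • z).re = ‖z‖ * cos (t + z.arg) := by
  have hre := Complex.norm_mul_cos_arg z
  have him := Complex.norm_mul_sin_arg z
  rw [cos_add]
  simp only [Circle.smul_def, Circle.coe_exp, smul_eq_mul, Complex.mul_re,
    Complex.exp_ofReal_mul_I_re, Complex.exp_ofReal_mul_I_im]
  linear_combination -cos t * hre + sin t * him

variable (ρ : Measure ℂ) [SMulInvariantMeasure Circle ℂ ρ]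

lemma lintegral_volume_circle_orbit [SFinite ρ] {S : Set ℂ} (hS : MeasurableSet S) :
    ∫⁻ z, volume ({t | Circle.exp t • z ∈ S} ∩ Set.Ioc 0 π) ∂ρ = ρ S * ENNReal.ofReal π := by
  have hcont : Continuous (Function.uncurry fun (t : ℝ) (z : ℂ) => Circle.exp t • z) := by
    unfold Function.uncurry; fun_prop
  have h := lintegral_measure_orbit_mem ρ (volume.restrict (Set.Ioc 0 π)) hcont.measurable
    (fun t => measurePreserving_smul (Circle.exp t) ρ) hS
  rw [Measure.restrict_apply_univ, volume_Ioc, sub_zero] at h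
  rw [← h]
  refine lintegral_congr fun z => (Measure.restrict_apply ?_).symm
  exact (by fun_prop : Continuous fun t : ℝ => Circle.exp t • z).measurable hS

lemma ae_re_eq_zero_imp_eq_zero [SFinite ρ] : ∀ᵐ z ∂ρ, z.re = 0 → z = 0 := by
  set S : Set ℂ := {z | ¬(z.re = 0 → z = 0)} with hS
  have hmeas : MeasurableSet S := by
    rw [hS]
    measurability
  have horbit (z : ℂ) : volume ({t | Circle.exp t • z ∈ S} ∩ Set.Ioc 0 π) = 0 := by
    refine measure_mono_null ?_ (volume_cos_add_eq_zero z.arg)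
    rintro t ⟨ht, -⟩
    obtain ⟨hre, hne⟩ := Classical.not_imp.1 ht
    have hz : ‖z‖ ≠ 0 := by simpa [Circle.smul_def] using hne
    rw [re_circle_exp_smul] at hre
    exact (mul_eq_zero.1 hre).resolve_left hz
  have h := lintegral_volume_circle_orbit ρ hmeas
  simp only [horbit, lintegral_zero] at h
  rw [ae_iff]
  exact (mul_eq_zero.1 h.symm).resolve_right (by simp [pi_pos])

lemma measure_re_mul_re_neg [IsProbabilityMeasure ρ] (hρ : ρ {0} = 0) {θ : ℝ} (h₀ : 0 ≤ θ)
    (h₁ : θ ≤ π) :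
    ρ {z | z.re * (Circle.exp (-θ) • z).re < 0} = ENNReal.ofReal (θ / π) := by
  set S : Set ℂ := {z | z.re * (Circle.exp (-θ) • z).re < 0} with hS
  have hmeas : MeasurableSet S :=
    measurableSet_lt (by fun_prop : Continuous _).measurable measurable_const
  have horbit {z : ℂ} (hz : z ≠ 0) :
      volume ({t | Circle.exp t • z ∈ S} ∩ Set.Ioc 0 π) = ENNReal.ofReal θ := by
    rw [← volume_cos_mul_cos_neg h₀ h₁ z.arg]
    congr 2 with t
    have hsq : 0 < ‖z‖ * ‖z‖ := mul_self_pos.2 (norm_ne_zero_iff.2 hz)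
    rw [hS, Set.mem_ofPred_eq, Set.mem_ofPred_eq, smul_smul, ← Circle.exp_add,
      re_circle_exp_smul, re_circle_exp_smul, mul_mul_mul_comm, ← smul_eq_mul (‖z‖ * ‖z‖),
      smul_neg_iff_of_pos_left hsq, neg_add_eq_sub, sub_add_eq_add_sub, Set.mem_ofPred_eq]
  have hne : ∀ᵐ z ∂ρ, z ≠ 0 := measure_eq_zero_iff_ae_notMem.1 hρ
  have h := lintegral_volume_circle_orbit ρ hmeas
  rw [lintegral_congr_ae (hne.mono fun z hz => horbit hz), lintegral_const, measure_univ,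
    mul_one] at h
  rw [ENNReal.ofReal_div_of_pos pi_pos, h,
    ENNReal.mul_div_cancel_right (by simp [pi_pos]) ENNReal.ofReal_ne_top]

end CircleInvariant

section Angle

open InnerProductGeometry

variable {E : Type*} [NormedAddCommGroup E] [InnerProductSpace ℝ E]

lemma exists_eq_cos_angle_smul_add_sin_angle_smul {u w : E} (hu : ‖u‖ = 1) (hw : ‖w‖ = 1)
    (hθ : sin (angle u w) ≠ 0) :
    ∃ v : E, ‖v‖ = 1 ∧ ⟪u, v⟫ = 0 ∧ w = cos (angle u w) • u + sin (angle u w) • v := by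
  have hinner := inner_eq_cos_angle_of_norm_eq_one hu hw
  set θ := angle u w
  have hnorm : ‖w - cos θ • u‖ ^ 2 = sin θ ^ 2 := by
    rw [norm_sub_sq_real, real_inner_smul_right, real_inner_comm, hinner, norm_smul, hu, hw,
      norm_eq_abs, mul_one, sq_abs, sin_sq]
    ring
  refine ⟨(sin θ)⁻¹ • (w - cos θ • u), ?_, ?_, ?_⟩
  · have habs : ‖w - cos θ • u‖ = |sin θ| := by
      rw [← sqrt_sq_eq_abs, ← hnorm, sqrt_sq (norm_nonneg _)]
    rw [norm_smul, habs, norm_inv, norm_eq_abs, inv_mul_cancel₀ (abs_ne_zero.2 hθ)]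
  · rw [real_inner_smul_right, inner_sub_right, real_inner_smul_right, hinner,
      real_inner_self_eq_norm_sq, hu, one_pow, mul_one, sub_self, mul_zero]
  · rw [smul_inv_smul₀ hθ, add_sub_cancel]

lemma norm_sub_eq_two_mul_sin_angle_div_two {u w : E} (hu : ‖u‖ = 1) (hw : ‖w‖ = 1) :
    ‖u - w‖ = 2 * sin (angle u w / 2) := by
  have hsin : 0 ≤ sin (angle u w / 2) := sin_nonneg_of_nonneg_of_le_pi
    (by linarith [angle_nonneg u w]) (by linarith [angle_le_pi u w, pi_pos])
  rw [← sq_eq_sq₀ (norm_nonneg _) (by positivity), norm_sub_sq_real, hu, hw,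
    inner_eq_cos_angle_of_norm_eq_one hu hw, mul_pow, sin_sq_eq_half_sub,
    mul_div_cancel₀ _ two_ne_zero]
  ring

lemma norm_add_eq_two_mul_cos_angle_div_two {u w : E} (hu : ‖u‖ = 1) (hw : ‖w‖ = 1) :
    ‖u + w‖ = 2 * cos (angle u w / 2) := by
  rw [← sub_neg_eq_add, norm_sub_eq_two_mul_sin_angle_div_two hu (by rwa [norm_neg]),
    angle_neg_right, sub_div, sin_pi_div_two_sub]

end Angle

section RotationInvariant

open InnerProductGeometry

variable {E : Type*} [NormedAddCommGroup E] [InnerProductSpace ℝ E]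

/-- The coordinates of the orthogonal projection to the oriented plane with orthonormal basis
`u, v`, encoded as a complex number. -/
def planeCoord (u v x : E) : ℂ := ⟨⟪u, x⟫, ⟪v, x⟫⟩

/-- Invariance of a measure under the special orthogonal group of a Euclidean space. -/
def IsRotationInvariant [MeasurableSpace E] (ν : Measure E) : Prop :=
  ∀ g : E ≃ₗᵢ[ℝ] E, LinearEquiv.det g.toLinearEquiv = 1 → ν.map g = ν

lemma inner_reflection_span_singleton {w : E} (hw : ‖w‖ = 1) (x y : E) :
    ⟪y, (ℝ ∙ w).reflection x⟫ = 2 * ⟪w, x⟫ * ⟪y, w⟫ - ⟪y, x⟫ := by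
  rw [Submodule.reflection_singleton_apply, hw, inner_sub_right, ← Nat.cast_smul_eq_nsmul ℝ,
    real_inner_smul_right, real_inner_smul_right]
  simp only [Nat.cast_ofNat, RCLike.ofReal_real_eq_id, id, one_pow, div_one]
  ring

variable [FiniteDimensional ℝ E]

lemma det_reflection_trans_reflection_span_singleton {u w : E} (hu : u ≠ 0) (hw : w ≠ 0) :
    LinearEquiv.det
      ((ℝ ∙ u).reflection.trans (ℝ ∙ w).reflection).toLinearEquiv = 1 := by
  have hrank : Module.finrank ℝ (ℝ ∙ u)ᗮ = Module.finrank ℝ (ℝ ∙ w)ᗮ := by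
    have hu' := (ℝ ∙ u).finrank_add_finrank_orthogonal
    have hw' := (ℝ ∙ w).finrank_add_finrank_orthogonal
    rw [finrank_span_singleton hu] at hu'
    rw [finrank_span_singleton hw] at hw'
    lia
  change LinearEquiv.det ((ℝ ∙ u).reflection.toLinearEquiv.trans
    (ℝ ∙ w).reflection.toLinearEquiv) = 1
  rw [LinearEquiv.det_trans, Submodule.linearEquiv_det_reflection,
    Submodule.linearEquiv_det_reflection, hrank, ← mul_pow, neg_one_mul, neg_neg, one_pow]

-- A rotation by `2 t` is the product of the reflections in two lines at angle `t`.
lemma exists_det_eq_one_planeCoord_eq_smul {u v : E} (hu : ‖u‖ = 1) (hv : ‖v‖ = 1)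
    (huv : ⟪u, v⟫ = 0) (c : Circle) :
    ∃ g : E ≃ₗᵢ[ℝ] E, LinearEquiv.det g.toLinearEquiv = 1 ∧
      ∀ x, planeCoord u v (g x) = c • planeCoord u v x := by
  obtain ⟨t, rfl⟩ : ∃ t : ℝ, Circle.exp (2 * t) = c :=
    ⟨(c : ℂ).arg / 2, by rw [mul_div_cancel₀ _ two_ne_zero, Circle.exp_arg]⟩
  have hvu : ⟪v, u⟫ = 0 := by rw [real_inner_comm, huv]
  have huu : ⟪u, u⟫ = 1 := by rw [real_inner_self_eq_norm_sq, hu, one_pow]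
  have hvv : ⟪v, v⟫ = 1 := by rw [real_inner_self_eq_norm_sq, hv, one_pow]
  have hcs := cos_sq_add_sin_sq t
  set w := cos t • u + sin t • v with hw
  have hw_inner (x : E) : ⟪w, x⟫ = cos t * ⟪u, x⟫ + sin t * ⟪v, x⟫ := by
    rw [hw, inner_add_left, real_inner_smul_left, real_inner_smul_left]
  have huw : ⟪u, w⟫ = cos t := by rw [real_inner_comm, hw_inner, huu, hvu]; ring
  have hvw : ⟪v, w⟫ = sin t := by rw [real_inner_comm, hw_inner, huv, hvv]; ring
  have hw1 : ‖w‖ = 1 := by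
    rw [norm_eq_sqrt_real_inner, hw_inner, huw, hvw, ← sq, ← sq, hcs, sqrt_one]
  refine ⟨(ℝ ∙ u).reflection.trans (ℝ ∙ w).reflection,
    det_reflection_trans_reflection_span_singleton
      (ne_zero_of_norm_ne_zero (hu.trans_ne one_ne_zero))
      (ne_zero_of_norm_ne_zero (hw1.trans_ne one_ne_zero)), fun x => ?_⟩
  apply Complex.ext <;>
    simp only [planeCoord, LinearIsometryEquiv.trans_apply, inner_reflection_span_singleton hw1,
      inner_reflection_span_singleton hu, huu, hvu, hw_inner, huw, hvw, Circle.smul_def,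
      Circle.coe_exp, smul_eq_mul, Complex.mul_re, Complex.mul_im, Complex.exp_ofReal_mul_I_re,
      Complex.exp_ofReal_mul_I_im, cos_two_mul, sin_two_mul]
  · ring
  · linear_combination -2 * ⟪v, x⟫ * hcs

variable [MeasurableSpace E] [BorelSpace E] {ν : Measure E}

lemma measurable_planeCoord (u v : E) : Measurable (planeCoord u v) :=
  Complex.measurableEquivRealProd.symm.measurable.comp
    (by fun_prop : Measurable fun x => (⟪u, x⟫, ⟪v, x⟫))

namespace IsRotationInvariant

lemma smulInvariantMeasure_map_planeCoord (hν : IsRotationInvariant ν) {u v : E} (hu : ‖u‖ = 1)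
    (hv : ‖v‖ = 1) (huv : ⟪u, v⟫ = 0) :
    SMulInvariantMeasure Circle ℂ (ν.map (planeCoord u v)) := by
  have hcoord := measurable_planeCoord u v
  refine ((smulInvariantMeasure_tfae Circle _).out 0 5).2 fun c => ?_
  obtain ⟨g, hdet, hg⟩ := exists_det_eq_one_planeCoord_eq_smul hu hv huv c
  calc (ν.map (planeCoord u v)).map (c • ·) = ν.map (planeCoord u v ∘ g) := by
        rw [Measure.map_map (measurable_const_smul c) hcoord]
        congr 1
        ext x : 1
        exact (hg x).symm
    _ = ν.map (planeCoord u v) := by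
        rw [← Measure.map_map hcoord g.continuous.measurable, hν g hdet]

lemma ae_inner_eq_zero_imp [SFinite ν] (hν : IsRotationInvariant ν) {u v : E} (hu : ‖u‖ = 1)
    (hv : ‖v‖ = 1) (huv : ⟪u, v⟫ = 0) : ∀ᵐ x ∂ν, ⟪u, x⟫ = 0 → ⟪v, x⟫ = 0 := by
  have hcoord := measurable_planeCoord u v
  have := hν.smulInvariantMeasure_map_planeCoord hu hv huv
  filter_upwards [ae_of_ae_map hcoord.aemeasurable
    (ae_re_eq_zero_imp_eq_zero (ν.map (planeCoord u v)))] with x hx h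
  exact congrArg Complex.im (hx h)

lemma ae_inner_ne_zero [SFinite ν] (hν : IsRotationInvariant ν) (hν₀ : ν {0} = 0) {u : E}
    (hu : u ≠ 0) :
    ∀ᵐ x ∂ν, ⟪u, x⟫ ≠ 0 := by
  have hu₁ : ‖‖u‖⁻¹ • u‖ = 1 := norm_smul_inv_norm hu
  set b := stdOrthonormalBasis ℝ (ℝ ∙ u)ᗮ
  have hall : ∀ᵐ x ∂ν, ∀ i, ⟪u, x⟫ = 0 → ⟪(b i : E), x⟫ = 0 := by
    refine ae_all_iff.2 fun i => ?_
    have hub : ⟪u, (b i : E)⟫ = 0 :=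
      Submodule.mem_orthogonal_singleton_iff_inner_right.1 (b i).2
    filter_upwards [hν.ae_inner_eq_zero_imp (v := (b i : E)) hu₁ (b.norm_eq_one i)
      (by rw [real_inner_smul_left, hub, mul_zero])] with x hx hux
    exact hx (by rw [real_inner_smul_left, hux, mul_zero])
  filter_upwards [hall, measure_eq_zero_iff_ae_notMem.1 hν₀] with x hx hx₀ hux
  have hxu : x ∈ (ℝ ∙ u)ᗮ := Submodule.mem_orthogonal_singleton_iff_inner_right.2 hux
  have hzero : (⟨x, hxu⟩ : (ℝ ∙ u)ᗮ) = 0 :=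
    InnerProductSpace.ext_inner_left_basis b.toBasis fun i => by simpa using hx i hux
  exact hx₀ (congrArg Subtype.val hzero)

variable [IsProbabilityMeasure ν]

lemma measure_inner_mul_inner_neg_of_orthonormal (hν : IsRotationInvariant ν) (hν₀ : ν {0} = 0)
    {u v : E} (hu : ‖u‖ = 1) (hv : ‖v‖ = 1) (huv : ⟪u, v⟫ = 0) {θ : ℝ} (h₀ : 0 ≤ θ)
    (h₁ : θ ≤ π) :
    ν {x | ⟪u, x⟫ * ⟪cos θ • u + sin θ • v, x⟫ < 0} = ENNReal.ofReal (θ / π) := by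
  have hcoord := measurable_planeCoord u v
  have := hν.smulInvariantMeasure_map_planeCoord hu hv huv
  have := Measure.isProbabilityMeasure_map (μ := ν) hcoord.aemeasurable
  have hzero : ν.map (planeCoord u v) {0} = 0 := by
    rw [Measure.map_apply hcoord (measurableSet_singleton 0), measure_eq_zero_iff_ae_notMem]
    filter_upwards [hν.ae_inner_ne_zero hν₀ (ne_zero_of_norm_ne_zero (hu.trans_ne one_ne_zero))]
      with x hx h
    exact hx (congrArg Complex.re h)
  rw [← measure_re_mul_re_neg _ hzero h₀ h₁, Measure.map_apply hcoord]
  · congr 1 with x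
    simp only [Set.mem_ofPred_eq, Set.mem_preimage, planeCoord, Circle.smul_def, Circle.coe_exp,
      smul_eq_mul, Complex.mul_re, Complex.exp_ofReal_mul_I_re, Complex.exp_ofReal_mul_I_im,
      cos_neg, sin_neg, inner_add_left, real_inner_smul_left, neg_mul, sub_neg_eq_add]
  · exact measurableSet_lt (by fun_prop : Continuous _).measurable measurable_const

lemma measure_inner_mul_inner_neg_of_norm_eq_one (hν : IsRotationInvariant ν) (hν₀ : ν {0} = 0)
    {u w : E} (hu : ‖u‖ = 1) (hw : ‖w‖ = 1) :
    ν {x | ⟪u, x⟫ * ⟪w, x⟫ < 0} = ENNReal.ofReal (angle u w / π) := by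
  by_cases hθ : sin (angle u w) = 0
  · rcases sin_eq_zero_iff_angle_eq_zero_or_angle_eq_pi.1 hθ with hangle | hangle <;>
      rw [hangle]
    · obtain ⟨-, r, hr, rfl⟩ := angle_eq_zero_iff.1 hangle
      have hempty : {x | ⟪u, x⟫ * ⟪r • u, x⟫ < 0} = ∅ := by
        ext x
        simp only [real_inner_smul_left, Set.mem_ofPred_eq, Set.mem_empty_iff_false, iff_false,
          not_lt, mul_left_comm _ r]
        exact mul_nonneg hr.le (mul_self_nonneg _)
      rw [hempty, measure_empty, zero_div, ENNReal.ofReal_zero]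
    · obtain ⟨-, r, hr, rfl⟩ := angle_eq_pi_iff.1 hangle
      rw [div_self pi_ne_zero, ENNReal.ofReal_one]
      have hae : ∀ᵐ x ∂ν, ⟪u, x⟫ * ⟪r • u, x⟫ < 0 := by
        filter_upwards [hν.ae_inner_ne_zero hν₀ (ne_zero_of_norm_ne_zero (hu.trans_ne one_ne_zero))]
          with x hx
        rw [real_inner_smul_left, mul_left_comm]
        exact mul_neg_of_neg_of_pos hr (mul_self_pos.2 hx)
      exact (measure_congr (eventuallyEq_univ.2 hae)).trans measure_univ
  · obtain ⟨v, hv, huv, hwv⟩ := exists_eq_cos_angle_smul_add_sin_angle_smul hu hw hθ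
    rw [← hν.measure_inner_mul_inner_neg_of_orthonormal hν₀ hu hv huv (angle_nonneg u w)
      (angle_le_pi u w), ← hwv]

lemma measure_inner_mul_inner_neg (hν : IsRotationInvariant ν) (hν₀ : ν {0} = 0)
    {n m : E} (hn : n ≠ 0) (hm : m ≠ 0) :
    ν {x | ⟪n, x⟫ * ⟪m, x⟫ < 0} = ENNReal.ofReal (angle n m / π) := by
  have hn₁ : ‖‖n‖⁻¹ • n‖ = 1 := norm_smul_inv_norm hn
  have hm₁ : ‖‖m‖⁻¹ • m‖ = 1 := norm_smul_inv_norm hm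
  have hn' : 0 < ‖n‖⁻¹ := by positivity
  have hm' : 0 < ‖m‖⁻¹ := by positivity
  rw [← angle_smul_left_of_pos n m hn', ← angle_smul_right_of_pos _ m hm',
    ← hν.measure_inner_mul_inner_neg_of_norm_eq_one hν₀ hn₁ hm₁]
  congr 1 with x
  rw [Set.mem_ofPred_eq, Set.mem_ofPred_eq, real_inner_smul_left, real_inner_smul_left,
    mul_mul_mul_comm, ← smul_eq_mul (_ * _), smul_neg_iff_of_pos_left (mul_pos hn' hm')]

end IsRotationInvariant

end RotationInvariant

section HemisphereLift

open InnerProductGeometry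

variable {E : Type*} [NormedAddCommGroup E] [InnerProductSpace ℝ E]

/-- The representative of the line through `x` in the closed half-space with inner normal `e`:
the map `F` of the paper with `e` in place of `e_d`. -/
def hemisphereLift (e x : E) : E := if 0 ≤ ⟪x, e⟫ then x else -x

lemma hemisphereLift_map (g : E ≃ₗᵢ[ℝ] E) (e x : E) :
    hemisphereLift e (g x) = g (hemisphereLift (g.symm e) x) := by
  have hinner : ⟪g x, e⟫ = ⟪x, g.symm e⟫ := by
    rw [← g.inner_map_map x, g.apply_symm_apply]
  rw [hemisphereLift, hemisphereLift, hinner, apply_ite g, map_neg]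

lemma norm_hemisphereLift_sub {e n m : E} (hn : ⟪n, e⟫ ≠ 0) (hm : ⟪m, e⟫ ≠ 0) :
    ‖hemisphereLift e n - hemisphereLift e m‖ =
      if ⟪n, e⟫ * ⟪m, e⟫ < 0 then ‖n + m‖ else ‖n - m‖ := by
  rcases hn.lt_or_gt with hn | hn <;> rcases hm.lt_or_gt with hm | hm
  · rw [hemisphereLift, hemisphereLift, if_neg hn.not_ge, if_neg hm.not_ge,
      if_neg (mul_pos_of_neg_of_neg hn hm).not_gt, neg_sub_neg, norm_sub_rev]
  · rw [hemisphereLift, hemisphereLift, if_neg hn.not_ge, if_pos hm.le,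
      if_pos (mul_neg_of_neg_of_pos hn hm), ← neg_add', norm_neg]
  · rw [hemisphereLift, hemisphereLift, if_pos hn.le, if_neg hm.not_ge,
      if_pos (mul_neg_of_pos_of_neg hn hm), sub_neg_eq_add]
  · rw [hemisphereLift, hemisphereLift, if_pos hn.le, if_pos hm.le,
      if_neg (mul_pos hn hm).not_gt]

variable [MeasurableSpace E] [BorelSpace E]

lemma measurable_hemisphereLift (x : E) : Measurable fun e => hemisphereLift e x :=
  Measurable.ite (measurableSet_le measurable_const (by fun_prop : Continuous _).measurable)
    measurable_const measurable_const

variable [FiniteDimensional ℝ E] {ν : Measure E} [IsProbabilityMeasure ν]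

namespace IsRotationInvariant

lemma lintegral_norm_hemisphereLift_sub (hν : IsRotationInvariant ν) (hν₀ : ν {0} = 0)
    {n m : E} (hn : n ≠ 0) (hm : m ≠ 0) :
    ∫⁻ e, ENNReal.ofReal ‖hemisphereLift e n - hemisphereLift e m‖ ∂ν =
      ENNReal.ofReal ((1 - angle n m / π) * ‖n - m‖ + angle n m / π * ‖n + m‖) := by
  classical
  have hp₀ : 0 ≤ angle n m / π := div_nonneg (angle_nonneg n m) pi_pos.le
  have hp₁ : 0 ≤ 1 - angle n m / π :=
    sub_nonneg.2 (div_le_one_of_le₀ (angle_le_pi n m) pi_pos.le)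
  set S : Set E := {e | ⟪n, e⟫ * ⟪m, e⟫ < 0}
  have hmeas : MeasurableSet S :=
    measurableSet_lt (by fun_prop : Continuous _).measurable measurable_const
  have hνS : ν S = ENNReal.ofReal (angle n m / π) :=
    hν.measure_inner_mul_inner_neg hν₀ hn hm
  have hνSc : ν Sᶜ = ENNReal.ofReal (1 - angle n m / π) := by
    rw [prob_compl_eq_one_sub hmeas, hνS, ← ENNReal.ofReal_one, ENNReal.ofReal_sub _ hp₀]
  have hae : (fun e => ENNReal.ofReal ‖hemisphereLift e n - hemisphereLift e m‖) =ᵐ[ν]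
      S.piecewise (fun _ => ENNReal.ofReal ‖n + m‖) (fun _ => ENNReal.ofReal ‖n - m‖) := by
    filter_upwards [hν.ae_inner_ne_zero hν₀ hn, hν.ae_inner_ne_zero hν₀ hm] with e hne hme
    rw [norm_hemisphereLift_sub hne hme, apply_ite ENNReal.ofReal]
    rfl
  rw [lintegral_congr_ae hae, lintegral_piecewise hmeas, setLIntegral_const, setLIntegral_const,
    hνS, hνSc, ← ENNReal.ofReal_mul (norm_nonneg _), ← ENNReal.ofReal_mul (norm_nonneg _),
    ← ENNReal.ofReal_add (by positivity) (by positivity)]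
  congr 1
  ring

lemma lintegral_norm_hemisphereLift_sub_le (hν : IsRotationInvariant ν) (hν₀ : ν {0} = 0)
    {n m : E} (hn : ‖n‖ = 1) (hm : ‖m‖ = 1) :
    ∫⁻ e, ENNReal.ofReal ‖hemisphereLift e n - hemisphereLift e m‖ ∂ν ≤
      ENNReal.ofReal ((1 + 2 / π) * sin (angle n m)) := by
  rw [hν.lintegral_norm_hemisphereLift_sub hν₀ (ne_zero_of_norm_ne_zero (hn.trans_ne one_ne_zero))
    (ne_zero_of_norm_ne_zero (hm.trans_ne one_ne_zero))]
  refine ENNReal.ofReal_le_ofReal ?_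
  have htrig := convex_combination_sin_cos_le (t := angle n m / 2)
    (by linarith [angle_nonneg n m]) (by linarith [angle_le_pi n m])
  have hdouble := sin_two_mul (angle n m / 2)
  rw [mul_div_cancel₀ _ two_ne_zero] at htrig hdouble
  rw [norm_sub_eq_two_mul_sin_angle_div_two hn hm, norm_add_eq_two_mul_cos_angle_div_two hn hm,
    hdouble]
  linarith

end IsRotationInvariant

end HemisphereLift

section SpecialOrthogonal

variable {d : ℕ}

lemma toEuclideanCLM_mem_unitary (R : SOd d) :
    Matrix.toEuclideanCLM (n := Fin d) (𝕜 := ℝ) R ∈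
      unitary (EuclideanSpace ℝ (Fin d) →L[ℝ] EuclideanSpace ℝ (Fin d)) :=
  Unitary.map_mem (Matrix.toEuclideanCLM (n := Fin d) (𝕜 := ℝ))
    (Matrix.mem_specialOrthogonalGroup_iff.1 R.2).1

/-- The linear isometry of `ℝ^d` given by a matrix in `SO(d)`, which bundles `rot`. -/
def rotEquiv : SOd d →* (EuclideanSpace ℝ (Fin d) ≃ₗᵢ[ℝ] EuclideanSpace ℝ (Fin d)) where
  toFun R := Unitary.linearIsometryEquiv ⟨_, toEuclideanCLM_mem_unitary R⟩
  map_one' := by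
    rw [← map_one Unitary.linearIsometryEquiv]
    exact congrArg _ (Subtype.ext (map_one _))
  map_mul' R Q := by
    rw [← map_mul Unitary.linearIsometryEquiv]
    exact congrArg _ (Subtype.ext (map_mul _ _ _))

lemma rotEquiv_apply (R : SOd d) (x : EuclideanSpace ℝ (Fin d)) : rotEquiv R x = rot R x := rfl

lemma exists_rotEquiv_eq {g : EuclideanSpace ℝ (Fin d) ≃ₗᵢ[ℝ] EuclideanSpace ℝ (Fin d)}
    (hg : LinearEquiv.det g.toLinearEquiv = 1) : ∃ Q : SOd d, rotEquiv Q = g := by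
  set U := Unitary.linearIsometryEquiv.symm g
  set A := (Matrix.toEuclideanCLM (n := Fin d) (𝕜 := ℝ)).symm U
  have hA : Matrix.toEuclideanCLM (n := Fin d) (𝕜 := ℝ) A = U := StarAlgEquiv.apply_symm_apply _ _
  have hAg : A.toLpLin 2 2 = g.toLinearEquiv := congrArg ContinuousLinearMap.toLinearMap hA
  have hdet : A.det = 1 :=
    calc A.det = LinearMap.det (A.toLpLin 2 2) := (LinearMap.det_toLpLin 2 A).symm
      _ = 1 := by rw [hAg, ← LinearEquiv.coe_det, hg, Units.val_one]
  have hunitary : A ∈ Matrix.orthogonalGroup (Fin d) ℝ :=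
    Unitary.map_mem (Matrix.toEuclideanCLM (n := Fin d) (𝕜 := ℝ)).symm U.2
  refine ⟨⟨A, Matrix.mem_specialOrthogonalGroup_iff.2 ⟨hunitary, hdet⟩⟩, ?_⟩
  ext x : 1
  exact congrArg (· x) hA

lemma measurable_specialOrthogonal_entry (i j : Fin d) :
    Measurable fun R : SOd d => (R : Matrix (Fin d) (Fin d) ℝ) i j :=
  (measurable_pi_apply j).comp ((measurable_pi_apply i).comp measurable_subtype_coe)

lemma measurable_rotEquiv_symm_apply (e : EuclideanSpace ℝ (Fin d)) :
    Measurable fun R : SOd d => (rotEquiv R).symm e := by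
  have hinv (R : SOd d) : (rotEquiv R).symm e = rotEquiv R⁻¹ e := by rw [map_inv]; rfl
  simp only [hinv]
  refine (MeasurableEquiv.toLp 2 (Fin d → ℝ)).measurable.comp (measurable_pi_iff.2 fun i => ?_)
  change Measurable fun R : SOd d => ∑ j, (R : Matrix (Fin d) (Fin d) ℝ) j i * e j
  exact Finset.measurable_sum _ fun j _ =>
    (measurable_specialOrthogonal_entry j i).mul_const _

lemma measurable_specialOrthogonal_mul_right (Q : SOd d) : Measurable fun R : SOd d => R * Q := by
  refine Measurable.subtype_mk (measurable_pi_iff.2 fun i => measurable_pi_iff.2 fun j => ?_)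
  change Measurable fun R : SOd d =>
    ∑ k, (R : Matrix (Fin d) (Fin d) ℝ) i k * (Q : Matrix (Fin d) (Fin d) ℝ) k j
  exact Finset.measurable_sum _ fun k _ =>
    (measurable_specialOrthogonal_entry i k).mul_const _

lemma isRotationInvariant_map_rotEquiv_symm_apply {μ : Measure (SOd d)}
    (hμ : ∀ Q : SOd d, μ.map (fun R => R * Q) = μ) (e : EuclideanSpace ℝ (Fin d)) :
    IsRotationInvariant (μ.map fun R => (rotEquiv R).symm e) := by
  intro g hg
  obtain ⟨Q, rfl⟩ := exists_rotEquiv_eq hg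
  have hpole := measurable_rotEquiv_symm_apply e
  rw [Measure.map_map (rotEquiv Q).continuous.measurable hpole]
  nth_rw 2 [← hμ Q⁻¹]
  rw [Measure.map_map hpole (measurable_specialOrthogonal_mul_right Q⁻¹)]
  congr 1
  ext R : 1
  simp only [Function.comp_apply, map_mul, map_inv]
  rfl

lemma map_rotEquiv_symm_apply_singleton_zero (μ : Measure (SOd d))
    {e : EuclideanSpace ℝ (Fin d)} (he : e ≠ 0) :
    (μ.map fun R => (rotEquiv R).symm e) {0} = 0 := by
  simp [Measure.map_apply (measurable_rotEquiv_symm_apply e) (measurableSet_singleton 0),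
    Set.preimage, he]

-- As each `R` is an isometry, moving it onto the pole turns the average over `R` into one over `ξ`.
lemma lintegral_norm_hemisphereLift_rot_sub (μ : Measure (SOd d))
    (e n m : EuclideanSpace ℝ (Fin d)) :
    ∫⁻ R, ENNReal.ofReal ‖hemisphereLift e (rot R n) - hemisphereLift e (rot R m)‖ ∂μ =
      ∫⁻ ξ, ENNReal.ofReal ‖hemisphereLift ξ n - hemisphereLift ξ m‖
        ∂μ.map fun R => (rotEquiv R).symm e := by
  have hmeas : Measurable fun ξ => ENNReal.ofReal ‖hemisphereLift ξ n - hemisphereLift ξ m‖ :=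
    ((measurable_hemisphereLift n).sub (measurable_hemisphereLift m)).norm.ennreal_ofReal
  rw [lintegral_map hmeas (measurable_rotEquiv_symm_apply e)]
  simp only [← rotEquiv_apply, hemisphereLift_map, ← map_sub, LinearIsometryEquiv.norm_map]

end SpecialOrthogonal

section Tensor

open InnerProductGeometry

variable {d : ℕ}

lemma frobNorm_outer_self_sub_outer_self (n m : EuclideanSpace ℝ (Fin d)) :
    frobNorm (outer n n - outer m m) = √(‖n‖ ^ 4 - 2 * ⟪n, m⟫ ^ 2 + ‖m‖ ^ 4) := by
  have hsum (x y : EuclideanSpace ℝ (Fin d)) :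
      ∑ i, ∑ j, x i * y i * (x j * y j) = ⟪x, y⟫ ^ 2 := by
    rw [PiLp.inner_apply, sq, Finset.sum_mul_sum]
    simp [mul_comm]
  have hpow (x : EuclideanSpace ℝ (Fin d)) : ‖x‖ ^ 4 = ⟪x, x⟫ ^ 2 := by
    rw [real_inner_self_eq_norm_sq, ← pow_mul]
  rw [frobNorm, hpow, hpow, ← hsum, ← hsum, ← hsum]
  simp only [Finset.mul_sum, ← Finset.sum_sub_distrib, ← Finset.sum_add_distrib]
  congr! with i - j
  simp only [outer, Pi.sub_apply]
  ring

lemma frobNorm_outer_self_sub_outer_self_eq_sqrt_two_mul_sin {n m : EuclideanSpace ℝ (Fin d)}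
    (hn : ‖n‖ = 1) (hm : ‖m‖ = 1) :
    frobNorm (outer n n - outer m m) = √2 * sin (angle n m) := by
  rw [frobNorm_outer_self_sub_outer_self, hn, hm, inner_eq_cos_angle_of_norm_eq_one hn hm,
    ← abs_of_nonneg (sin_angle_nonneg n m), ← sqrt_sq_eq_abs, ← sqrt_mul zero_le_two, sin_sq]
  ring_nf

end Tensor

lemma exists_Fsym_eq_hemisphereLift {d : ℕ} (hd : 0 < d) :
    ∃ e : EuclideanSpace ℝ (Fin d), e ≠ 0 ∧ Fsym = hemisphereLift e := by
  refine ⟨EuclideanSpace.single ⟨d - 1, Nat.sub_lt hd one_pos⟩ 1, by simp, funext fun x => ?_⟩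
  simp [Fsym, hemisphereLift, lastCoord, hd, EuclideanSpace.inner_single_right]

theorem average_euclidean_distance_le_tensor
    (d : ℕ) (hd : 2 ≤ d)
    (μ : Measure (SOd d)) [IsProbabilityMeasure μ]
    (hμleft : ∀ R₀ : SOd d, μ.map (fun R => R₀ * R) = μ)
    (hμright : ∀ R₀ : SOd d, μ.map (fun R => R * R₀) = μ)
    (n m : EuclideanSpace ℝ (Fin d)) (hn : ‖n‖ = 1) (hm : ‖m‖ = 1) :
    ∫⁻ R, ENNReal.ofReal ‖Fsym (rot R n) - Fsym (rot R m)‖ ∂μ ≤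
      ENNReal.ofReal ((1 + 2 / π) * ((1 / Real.sqrt 2) * frobNorm (outer n n - outer m m))) := by
  obtain ⟨e, he, hF⟩ := exists_Fsym_eq_hemisphereLift (d := d) (by lia)
  set ν := μ.map fun R => (rotEquiv R).symm e
  have : IsProbabilityMeasure ν :=
    Measure.isProbabilityMeasure_map (measurable_rotEquiv_symm_apply e).aemeasurable
  have hν : IsRotationInvariant ν := isRotationInvariant_map_rotEquiv_symm_apply hμright e
  have hν₀ : ν {0} = 0 := map_rotEquiv_symm_apply_singleton_zero μ he
  calc ∫⁻ R, ENNReal.ofReal ‖Fsym (rot R n) - Fsym (rot R m)‖ ∂μ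
      = ∫⁻ ξ, ENNReal.ofReal ‖hemisphereLift ξ n - hemisphereLift ξ m‖ ∂ν := by
        rw [hF, lintegral_norm_hemisphereLift_rot_sub]
    _ ≤ ENNReal.ofReal ((1 + 2 / π) * sin (InnerProductGeometry.angle n m)) :=
        hν.lintegral_norm_hemisphereLift_sub_le hν₀ hn hm
    _ = ENNReal.ofReal ((1 + 2 / π) * ((1 / √2) * frobNorm (outer n n - outer m m))) := by
        rw [frobNorm_outer_self_sub_outer_self_eq_sqrt_two_mul_sin hn hm,
          ← mul_assoc (1 / √2), one_div_mul_cancel (by positivity), one_mul]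
end
end

section
/- Let d ≥ 2 and for θ ∈ ℝ let R_θ ∈ SO(d) be the rotation acting on the plane spanned by e_{d-1}, e_d by R_θ e_d = cos θ · e_d + sin θ · e_{d-1} and R_θ e_{d-1} = −sin θ · e_d + cos θ · e_{d-1}, and acting as the identity on the span of e_1, …, e_{d-2}. Define ψ(θ) = μ( G_{e_d}^+ ∩ G_{R_θ e_d}^- ) for θ ∈ [0, π]. Then for every θ ∈ [0, π) and ξ ∈ [0, π − θ], it holds ψ(θ + ξ) = ψ(θ) + ψ(ξ). -/
noncomputable section
open MeasureTheory Real Filter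
open scoped ENNReal RealInnerProductSpace

/-!
For orthonormal `u`, `v`, the map `R ↦ (⟪R u, w⟫, ⟪R v, w⟫)` from `SO(d)` to the plane turns right
translation by a rotation in the plane of `u` and `v` into a rotation, so it pushes `μ` forward to
a rotation-invariant measure on `ℝ² = ℂ`, and `ψ θ` is the mass of an open sector of opening `θ`.
Adjacent sectors fit together up to the line separating them. Away from the origin, which lies in
no sector, that line is null: these uncountably many disjoint punctured lines have equal mass, and
at most countably many of them can have positive mass.
-/

section Plane

variable {r s t : ℝ}

/-- The coordinate `⟪e^{it}, z⟫` of `z ∈ ℂ = ℝ²` in the direction of angle `t`. -/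
def directionCoord (t : ℝ) (z : ℂ) : ℝ :=
  cos t * z.re + sin t * z.im

/-- The open sector of points with positive coordinate in direction `s` and negative coordinate
in direction `t`; the trace in the plane of `G_n^+ ∩ G_m^-`. -/
def sector (s t : ℝ) : Set ℂ :=
  {z | 0 < directionCoord s z ∧ directionCoord t z < 0}

/-- The line through the origin orthogonal to the direction `t`, without the origin: a
rotation-invariant measure may charge the origin. -/
def puncturedLine (t : ℝ) : Set ℂ :=
  {z | directionCoord t z = 0} \ {0}

lemma measurable_directionCoord (t : ℝ) : Measurable (directionCoord t) := by
  unfold directionCoord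
  fun_prop

lemma measurableSet_sector (s t : ℝ) : MeasurableSet (sector s t) :=
  (measurable_directionCoord s measurableSet_Ioi).inter
    (measurable_directionCoord t measurableSet_Iio)

lemma directionCoord_exp_smul (s t : ℝ) (z : ℂ) :
    directionCoord t (Circle.exp s • z) = directionCoord (t - s) z := by
  simp only [directionCoord, Circle.smul_def, Circle.coe_exp, smul_eq_mul, Complex.mul_re,
    Complex.mul_im, Complex.exp_ofReal_mul_I_re, Complex.exp_ofReal_mul_I_im, cos_sub, sin_sub]
  ring

lemma directionCoord_sub_pi (t : ℝ) (z : ℂ) :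
    directionCoord (t - π) z = -directionCoord t z := by
  simp only [directionCoord, cos_sub_pi, sin_sub_pi]
  ring

lemma sin_sub_mul_directionCoord (r s t : ℝ) (z : ℂ) :
    sin (t - s) * directionCoord r z + sin (s - r) * directionCoord t z =
      sin (t - r) * directionCoord s z := by
  simp only [directionCoord, sin_sub]
  ring

lemma directionCoord_pos_of_pos_of_neg {z : ℂ} (hrs : r ≤ s) (hst : s ≤ t) (htr : t ≤ r + π)
    (hs : 0 < directionCoord s z) (ht : directionCoord t z < 0) : 0 < directionCoord r z := by
  rcases hrs.eq_or_lt with rfl | hrs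
  · exact hs
  have hst : s < t := hst.lt_of_ne fun h => (h ▸ hs).not_gt ht
  have hsr_sin : 0 < sin (s - r) := sin_pos_of_pos_of_lt_pi (by linarith) (by linarith)
  have hts_sin : 0 < sin (t - s) := sin_pos_of_pos_of_lt_pi (by linarith) (by linarith)
  have htr_sin : 0 ≤ sin (t - r) := sin_nonneg_of_nonneg_of_le_pi (by linarith) (by linarith)
  refine pos_of_mul_pos_right ?_ hts_sin.le
  linarith [sin_sub_mul_directionCoord r s t z, mul_nonneg htr_sin hs.le,
    mul_neg_of_pos_of_neg hsr_sin ht]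

lemma directionCoord_neg_of_pos_of_neg {z : ℂ} (hrs : r ≤ s) (hst : s ≤ t) (htr : t ≤ r + π)
    (hr : 0 < directionCoord r z) (hs : directionCoord s z < 0) : directionCoord t z < 0 := by
  have h : 0 < directionCoord (t - π) z :=
    directionCoord_pos_of_pos_of_neg (by linarith) hrs (by linarith) hr hs
  rwa [directionCoord_sub_pi, neg_pos] at h

lemma disjoint_sector (r s t : ℝ) : Disjoint (sector r s) (sector s t) :=
  Set.disjoint_left.2 fun _ h h' => lt_asymm h.2 h'.1

lemma sector_sdiff_puncturedLine (hrs : r ≤ s) (hst : s ≤ t) (htr : t ≤ r + π) :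
    sector r t \ puncturedLine s = sector r s ∪ sector s t := by
  ext z
  constructor
  · rintro ⟨⟨hr, ht⟩, hs⟩
    have hz : z ≠ 0 := by
      rintro rfl
      simp [directionCoord] at hr
    rcases lt_trichotomy (directionCoord s z) 0 with h | h | h
    · exact Or.inl ⟨hr, h⟩
    · exact absurd ⟨h, hz⟩ hs
    · exact Or.inr ⟨h, ht⟩
  · rintro (⟨hr, hs⟩ | ⟨hs, ht⟩)
    · exact ⟨⟨hr, directionCoord_neg_of_pos_of_neg hrs hst htr hr hs⟩, fun h => hs.ne h.1⟩
    · exact ⟨⟨directionCoord_pos_of_pos_of_neg hrs hst htr hs ht, ht⟩, fun h => hs.ne' h.1⟩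

lemma preimage_exp_smul_sector (r s t : ℝ) :
    (Circle.exp r • ·) ⁻¹' sector s t = sector (s - r) (t - r) := by
  simp only [sector, Set.preimage_ofPred_eq, directionCoord_exp_smul]

lemma preimage_exp_smul_puncturedLine (s t : ℝ) :
    (Circle.exp s • ·) ⁻¹' puncturedLine t = puncturedLine (t - s) := by
  ext z
  simp only [puncturedLine, Set.mem_preimage, Set.mem_sdiff, Set.mem_ofPred_eq,
    directionCoord_exp_smul, Set.mem_singleton_iff, smul_eq_zero_iff_eq]

lemma puncturedLine_neg_arctan_subset {c : ℝ} :
    puncturedLine (-arctan c) ⊆ {z | z.re / z.im = c} := by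
  rintro z ⟨hz, hz0⟩
  have hcos : cos (arctan c) ≠ 0 := (cos_arctan_pos c).ne'
  have hre : z.re = c * z.im := by
    refine mul_left_cancel₀ hcos ?_
    have hz : cos (-arctan c) * z.re + sin (-arctan c) * z.im = 0 := hz
    rw [cos_neg, sin_neg, ← tan_mul_cos hcos, tan_arctan] at hz
    linear_combination hz
  have him : z.im ≠ 0 := fun h => hz0 (Complex.ext (by simp [hre, h]) h)
  exact (div_eq_iff him).2 hre

variable (ν : Measure ℂ) [SFinite ν]

lemma exists_measure_puncturedLine_eq_zero : ∃ t, ν (puncturedLine t) = 0 := by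
  have hcount : {c : ℝ | 0 < ν {z | z.re / z.im = c}}.Countable :=
    Measure.countable_meas_level_set_pos (by fun_prop)
  obtain ⟨c, hc⟩ := (hcount.dense_compl ℝ).nonempty
  exact ⟨-arctan c, measure_mono_null puncturedLine_neg_arctan_subset (by simpa using hc)⟩

variable [SMulInvariantMeasure Circle ℂ ν]

lemma measure_puncturedLine (t : ℝ) : ν (puncturedLine t) = 0 := by
  obtain ⟨s, hs⟩ := exists_measure_puncturedLine_eq_zero ν
  rw [← sub_sub_cancel s t, ← preimage_exp_smul_puncturedLine, measure_preimage_smul, hs]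

lemma measure_sector_add_measure_sector (hrs : r ≤ s) (hst : s ≤ t) (htr : t ≤ r + π) :
    ν (sector r s) + ν (sector s t) = ν (sector r t) := by
  rw [← measure_union (disjoint_sector r s t) (measurableSet_sector s t),
    ← sector_sdiff_puncturedLine hrs hst htr, measure_sdiff_null (measure_puncturedLine ν s)]

lemma measure_sector_zero_add {θ ξ : ℝ} (hθ : 0 ≤ θ) (hξ : 0 ≤ ξ) (hθξ : θ + ξ ≤ π) :
    ν (sector 0 (θ + ξ)) = ν (sector 0 θ) + ν (sector 0 ξ) := by
  have hrot : ν (sector 0 ξ) = ν (sector θ (θ + ξ)) := by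
    rw [← measure_preimage_smul ν (Circle.exp θ) (sector θ (θ + ξ)), preimage_exp_smul_sector,
      sub_self, add_sub_cancel_left]
  rw [hrot, measure_sector_add_measure_sector ν hθ (by linarith) (by linarith)]

end Plane

section Rodrigues

/-- Rodrigues' formula for `exp (t J)`, valid when `J ^ 3 = -J`. -/
def rodrigues {A : Type*} [Ring A] [Algebra ℝ A] (J : A) (t : ℝ) : A :=
  1 + sin t • J + (1 - cos t) • J ^ 2

lemma rodrigues_zero {A : Type*} [Ring A] [Algebra ℝ A] (J : A) : rodrigues J 0 = 1 := by
  simp [rodrigues]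

lemma rodrigues_mul_rodrigues {A : Type*} [Ring A] [Algebra ℝ A] {J : A} (hJ : J ^ 3 = -J)
    (s t : ℝ) : rodrigues J s * rodrigues J t = rodrigues J (s + t) := by
  have hmul_sq : J * J ^ 2 = -J := by rw [← pow_succ', hJ]
  have hsq_mul : J ^ 2 * J = -J := by rw [← pow_succ, hJ]
  have hsq_mul_sq : J ^ 2 * J ^ 2 = -J ^ 2 := by rw [sq J, mul_assoc, ← sq, hmul_sq, mul_neg, ← sq]
  simp only [rodrigues, mul_add, add_mul, smul_mul_assoc, mul_smul_comm, one_mul, mul_one,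
    ← sq J, hmul_sq, hsq_mul, hsq_mul_sq, sin_add, cos_add]
  module

open Matrix

variable {n : Type*}

lemma transpose_rodrigues [Fintype n] [DecidableEq n] {J : Matrix n n ℝ} (hJ : Jᵀ = -J) (t : ℝ) :
    (rodrigues J t)ᵀ = rodrigues J (-t) := by
  simp [rodrigues, transpose_pow, hJ]

lemma rodrigues_mem_specialOrthogonalGroup [Fintype n] [DecidableEq n] {J : Matrix n n ℝ}
    (hJ : J ^ 3 = -J) (hJ_skew : Jᵀ = -J) (t : ℝ) : rodrigues J t ∈ specialOrthogonalGroup n ℝ := by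
  have horth (t : ℝ) : rodrigues J t * (rodrigues J t)ᵀ = 1 := by
    rw [transpose_rodrigues hJ_skew, rodrigues_mul_rodrigues hJ, add_neg_cancel, rodrigues_zero]
  refine mem_specialOrthogonalGroup_iff.2 ⟨(mem_orthogonalGroup_iff _ _).2 (horth t), ?_⟩
  -- Orthogonality leaves the sign of the determinant open; half the angle shows it is a square.
  calc (rodrigues J t).det
      = (rodrigues J (t / 2)).det * (rodrigues J (t / 2))ᵀ.det := by
        rw [det_transpose, ← det_mul, rodrigues_mul_rodrigues hJ, add_halves]
    _ = 1 := by rw [← det_mul, horth, det_one]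

/-- The skew-symmetric matrix `v uᵀ - u vᵀ`, which for orthonormal `u`, `v` generates the
rotations of their plane, turning `u` towards `v`. -/
def planeGenerator (u v : n → ℝ) : Matrix n n ℝ :=
  vecMulVec v u - vecMulVec u v

lemma transpose_planeGenerator (u v : n → ℝ) : (planeGenerator u v)ᵀ = -planeGenerator u v := by
  simp [planeGenerator, transpose_vecMulVec]

variable [Fintype n] {u v : n → ℝ}

lemma planeGenerator_mulVec_left (hu : u ⬝ᵥ u = 1) (huv : u ⬝ᵥ v = 0) :
    planeGenerator u v *ᵥ u = v := by
  simp [planeGenerator, sub_mulVec, vecMulVec_mulVec, dotProduct_comm v u, hu, huv]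

lemma planeGenerator_mulVec_right (hv : v ⬝ᵥ v = 1) (huv : u ⬝ᵥ v = 0) :
    planeGenerator u v *ᵥ v = -u := by
  simp [planeGenerator, sub_mulVec, vecMulVec_mulVec, hv, huv]

variable [DecidableEq n]

lemma planeGenerator_pow_three (hu : u ⬝ᵥ u = 1) (hv : v ⬝ᵥ v = 1) (huv : u ⬝ᵥ v = 0) :
    planeGenerator u v ^ 3 = -planeGenerator u v := by
  have hJu := planeGenerator_mulVec_left hu huv
  have hJv := planeGenerator_mulVec_right hv huv
  calc planeGenerator u v ^ 3
      = planeGenerator u v * (planeGenerator u v * (vecMulVec v u - vecMulVec u v)) := by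
        rw [pow_succ', sq, ← planeGenerator]
    _ = vecMulVec (-v) u - vecMulVec (-u) v := by
        rw [mul_sub, mul_vecMulVec, mul_vecMulVec, hJu, hJv, mul_sub, mul_vecMulVec,
          mul_vecMulVec, mulVec_neg, hJu, hJv]
    _ = -planeGenerator u v := by
        rw [neg_vecMulVec, neg_vecMulVec, planeGenerator, neg_sub']

lemma rodrigues_planeGenerator_mulVec_left (hu : u ⬝ᵥ u = 1) (hv : v ⬝ᵥ v = 1)
    (huv : u ⬝ᵥ v = 0) (t : ℝ) :
    rodrigues (planeGenerator u v) t *ᵥ u = cos t • u + sin t • v := by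
  simp only [rodrigues, sq, add_mulVec, one_mulVec, smul_mulVec, ← mulVec_mulVec,
    planeGenerator_mulVec_left hu huv, planeGenerator_mulVec_right hv huv]
  module

lemma rodrigues_planeGenerator_mulVec_right (hu : u ⬝ᵥ u = 1) (hv : v ⬝ᵥ v = 1)
    (huv : u ⬝ᵥ v = 0) (t : ℝ) :
    rodrigues (planeGenerator u v) t *ᵥ v = cos t • v - sin t • u := by
  simp only [rodrigues, sq, add_mulVec, one_mulVec, smul_mulVec, ← mulVec_mulVec, mulVec_neg,
    planeGenerator_mulVec_left hu huv, planeGenerator_mulVec_right hv huv]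
  module

end Rodrigues

section SpecialOrthogonal

variable {d : ℕ}

lemma measurable_matrix_apply {m n : Type*} (i : m) (j : n) :
    Measurable fun A : Matrix m n ℝ => A i j :=
  (measurable_pi_apply j).comp (measurable_pi_apply i)

instance {n : Type*} [Fintype n] : MeasurableMul₂ (Matrix n n ℝ) where
  measurable_mul := measurable_pi_iff.2 fun i => measurable_pi_iff.2 fun j =>
    Finset.measurable_sum _ fun k _ =>
      ((measurable_matrix_apply i k).comp measurable_fst).mul
        ((measurable_matrix_apply k j).comp measurable_snd)

instance {M : Type*} [Monoid M] [MeasurableSpace M] [MeasurableMul₂ M] (S : Submonoid M) :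
    MeasurableMul₂ S where
  measurable_mul := by
    refine Measurable.subtype_mk ?_
    fun_prop

lemma rot_add (R : SOd d) (x y : EuclideanSpace ℝ (Fin d)) :
    rot R (x + y) = rot R x + rot R y :=
  map_add (Matrix.toEuclideanLin R.1) x y

lemma rot_smul (R : SOd d) (c : ℝ) (x : EuclideanSpace ℝ (Fin d)) :
    rot R (c • x) = c • rot R x :=
  map_smul (Matrix.toEuclideanLin R.1) c x

lemma rot_mul (R Q : SOd d) (x : EuclideanSpace ℝ (Fin d)) : rot (R * Q) x = rot R (rot Q x) :=
  congrArg (WithLp.toLp 2) (Matrix.mulVec_mulVec x.ofLp R.1 Q.1).symm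

lemma measurable_inner_rot (x w : EuclideanSpace ℝ (Fin d)) :
    Measurable fun R : SOd d => ⟪rot R x, w⟫ := by
  simp only [PiLp.inner_apply]
  refine Finset.measurable_sum _ fun i _ => Measurable.const_mul ?_ _
  change Measurable fun R : SOd d => ∑ j, R.1 i j * x j
  exact Finset.measurable_sum _ fun j _ =>
    ((measurable_matrix_apply i j).comp measurable_subtype_coe).mul_const _

lemma lastCoord_eq_inner (hd : 0 < d) (x : EuclideanSpace ℝ (Fin d)) :
    lastCoord x = ⟪x, EuclideanSpace.single ⟨d - 1, Nat.sub_lt hd Nat.one_pos⟩ 1⟫ := by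
  simp [lastCoord, hd, EuclideanSpace.inner_single_right]

variable {u v : EuclideanSpace ℝ (Fin d)}

lemma exists_rot_plane (hu : ‖u‖ = 1) (hv : ‖v‖ = 1) (huv : ⟪u, v⟫ = 0) (t : ℝ) :
    ∃ Q : SOd d, rot Q u = cos t • u + sin t • v ∧ rot Q v = cos t • v - sin t • u := by
  have hdot (x y : EuclideanSpace ℝ (Fin d)) : x.ofLp ⬝ᵥ y.ofLp = ⟪x, y⟫ := by
    rw [EuclideanSpace.inner_eq_star_dotProduct, star_trivial, dotProduct_comm]
  have hu' : u.ofLp ⬝ᵥ u.ofLp = 1 := by rw [hdot, real_inner_self_eq_norm_sq, hu, one_pow]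
  have hv' : v.ofLp ⬝ᵥ v.ofLp = 1 := by rw [hdot, real_inner_self_eq_norm_sq, hv, one_pow]
  have huv' : u.ofLp ⬝ᵥ v.ofLp = 0 := (hdot u v).trans huv
  have hJ := planeGenerator_pow_three hu' hv' huv'
  refine ⟨⟨rodrigues (planeGenerator u.ofLp v.ofLp) t,
    rodrigues_mem_specialOrthogonalGroup hJ (transpose_planeGenerator _ _) t⟩,
    congrArg (WithLp.toLp 2) (rodrigues_planeGenerator_mulVec_left hu' hv' huv' t),
    congrArg (WithLp.toLp 2) (rodrigues_planeGenerator_mulVec_right hu' hv' huv' t)⟩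

/-- The coordinates `(⟪R u, w⟫, ⟪R v, w⟫)`, that is, the orthogonal projection of `R⁻¹ w` to the
plane of `u` and `v`, as a complex number. -/
def planeProjection (u v w : EuclideanSpace ℝ (Fin d)) (R : SOd d) : ℂ :=
  ⟨⟪rot R u, w⟫, ⟪rot R v, w⟫⟩

variable (w : EuclideanSpace ℝ (Fin d))

lemma measurable_planeProjection (u v : EuclideanSpace ℝ (Fin d)) :
    Measurable (planeProjection u v w) :=
  Complex.measurableEquivRealProd.symm.measurable.comp
    ((measurable_inner_rot u w).prodMk (measurable_inner_rot v w))

lemma inner_rot_eq_directionCoord (u v : EuclideanSpace ℝ (Fin d)) (R : SOd d) (t : ℝ) :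
    ⟪rot R (cos t • u + sin t • v), w⟫ = directionCoord t (planeProjection u v w R) := by
  simp only [rot_add, rot_smul, inner_add_left, real_inner_smul_left, directionCoord,
    planeProjection]

lemma planeProjection_mul {Q : SOd d} {t : ℝ} (hQu : rot Q u = cos t • u + sin t • v)
    (hQv : rot Q v = cos t • v - sin t • u) (R : SOd d) :
    planeProjection u v w (R * Q) = Circle.exp (-t) • planeProjection u v w R := by
  have hre : ⟪rot R (rot Q u), w⟫ = cos t * ⟪rot R u, w⟫ + sin t * ⟪rot R v, w⟫ := by
    rw [hQu, inner_rot_eq_directionCoord, directionCoord, planeProjection]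
  have him : ⟪rot R (rot Q v), w⟫ = cos t * ⟪rot R v, w⟫ - sin t * ⟪rot R u, w⟫ := by
    rw [hQv, sub_eq_add_neg, ← neg_smul, rot_add, rot_smul, rot_smul, inner_add_left,
      real_inner_smul_left, real_inner_smul_left, neg_mul, ← sub_eq_add_neg]
  simp only [planeProjection, rot_mul, hre, him, Circle.smul_def, Circle.coe_exp, smul_eq_mul,
    Complex.ext_iff, Complex.mul_re, Complex.mul_im, Complex.exp_ofReal_mul_I_re,
    Complex.exp_ofReal_mul_I_im, cos_neg, sin_neg]
  constructor <;> ring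

variable (μ : Measure (SOd d)) [μ.IsMulRightInvariant]

lemma smulInvariantMeasure_map_planeProjection (hu : ‖u‖ = 1) (hv : ‖v‖ = 1) (huv : ⟪u, v⟫ = 0) :
    SMulInvariantMeasure Circle ℂ (μ.map (planeProjection u v w)) := by
  refine ⟨fun c S hS => ?_⟩
  obtain ⟨t, rfl⟩ := Circle.exp_surjective c
  have hmeas := measurable_planeProjection w u v
  obtain ⟨Q, hQu, hQv⟩ := exists_rot_plane hu hv huv (-t)
  have hpre : planeProjection u v w ⁻¹' ((Circle.exp t • ·) ⁻¹' S) =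
      (· * Q) ⁻¹' (planeProjection u v w ⁻¹' S) := by
    ext R
    simp only [Set.mem_preimage, planeProjection_mul w hQu hQv, neg_neg]
  rw [Measure.map_apply hmeas (measurable_const_smul _ hS), hpre, measure_preimage_mul_right,
    Measure.map_apply hmeas hS]

theorem psi_additive_general [SFinite μ] (hu : ‖u‖ = 1) (hv : ‖v‖ = 1) (huv : ⟪u, v⟫ = 0)
    (ψ : ℝ → ℝ≥0∞)
    (hψ : ∀ θ, ψ θ = μ {R | 0 < ⟪rot R u, w⟫ ∧ ⟪rot R (cos θ • u + sin θ • v), w⟫ < 0})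
    {θ ξ : ℝ} (hθ : 0 ≤ θ) (hξ : 0 ≤ ξ) (hθξ : θ + ξ ≤ π) :
    ψ (θ + ξ) = ψ θ + ψ ξ := by
  have := smulInvariantMeasure_map_planeProjection w μ hu hv huv
  have hψ_sector (t : ℝ) : ψ t = μ.map (planeProjection u v w) (sector 0 t) := by
    rw [hψ, Measure.map_apply (measurable_planeProjection w u v) (measurableSet_sector 0 t)]
    simp only [sector, Set.preimage_ofPred_eq, ← inner_rot_eq_directionCoord, cos_zero, sin_zero,
      one_smul, zero_smul, add_zero]
  simp only [hψ_sector]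
  exact measure_sector_zero_add _ hθ hξ hθξ

end SpecialOrthogonal

/-!
STATEMENT 11: additivity of ψ(θ) = μ(G_{e_d}^+ ∩ G_{R_θ e_d}^-) from the proof of
Lemma 3.2, where R_θ e_d = cos θ · e_d + sin θ · e_{d-1} (the rotation R_θ acts in the
plane spanned by e_{d-1}, e_d and as the identity elsewhere, and G_{R_θ e_d}^- depends
only on the vector R_θ e_d).
-/

theorem psi_additive
    (d : ℕ) (hd : 2 ≤ d)
    (μ : Measure (SOd d)) [IsProbabilityMeasure μ]
    (hμleft : ∀ R₀ : SOd d, μ.map (fun R => R₀ * R) = μ)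
    (hμright : ∀ R₀ : SOd d, μ.map (fun R => R * R₀) = μ)
    (ψ : ℝ → ℝ≥0∞)
    (hψ : ∀ θ : ℝ, ψ θ = μ {R : SOd d |
      0 < lastCoord (rot R (EuclideanSpace.single (⟨d - 1, by omega⟩ : Fin d) (1 : ℝ))) ∧
      lastCoord (rot R
        (Real.cos θ • EuclideanSpace.single (⟨d - 1, by omega⟩ : Fin d) (1 : ℝ) +
         Real.sin θ • EuclideanSpace.single (⟨d - 2, by omega⟩ : Fin d) (1 : ℝ))) < 0}) :
    ∀ θ ∈ Set.Ico (0 : ℝ) π, ∀ ξ ∈ Set.Icc (0 : ℝ) (π - θ),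
      ψ (θ + ξ) = ψ θ + ψ ξ := by
  intro θ hθ ξ hξ
  have : μ.IsMulRightInvariant := ⟨hμright⟩
  have hd_pos : 0 < d := by omega
  have hne : d - 1 ≠ d - 2 := by omega
  simp only [lastCoord_eq_inner hd_pos] at hψ
  exact psi_additive_general _ μ (by simp) (by simp)
    (by simp [EuclideanSpace.inner_single_left, hne]) ψ hψ hθ.1 hξ.1 (by linarith [hξ.2])
end
end

section
/- Let d ≥ 2. Then μ( G_{e_d}^+ ∩ G_{e_{d-1}}^- ) = μ( G_{e_d}^+ ∩ G_{e_{d-1}}^+ ) = 1/4, where G_n^± = { R ∈ SO(d) : ±⟪Rn, e_d⟫ > 0 }. -/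
noncomputable section
open MeasureTheory Real Filter
open scoped ENNReal RealInnerProductSpace

/-!
STATEMENT 12: the normalization ψ(π/2) = 1/4 from the proof of Lemma 3.2:
μ(G_{e_d}^+ ∩ G_{e_{d-1}}^-) = μ(G_{e_d}^+ ∩ G_{e_{d-1}}^+) = 1/4.
-/

/-!
For a fixed row `p` and columns `i ≠ j`, the law of the complex number `R p i + R p j * I` is
invariant under multiplication by the unit circle: rotating that number is right multiplication of
`R` by a rotation in the `(i, j)` coordinate plane. A circle-invariant measure gives the same mass
to all the uncountably many punctured lines through `0`, which are disjoint, so it does not charge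
them; hence the quarter turn splits its mass outside `0` evenly among the four open quadrants.
The origin has mass zero as well, since a row of an invertible matrix does not vanish.
-/

open ComplexConjugate

section CircleInvariant

lemma uncountable_circle : Uncountable Circle := by
  rw [← not_countable_iff, Circle.argEquiv.countable_iff]
  exact fun h => (Cardinal.Real.Ioc_countable_iff.mp h).not_gt (by linarith [pi_pos])

lemma exists_circle_sq_eq (u : Circle) : ∃ w : Circle, w ^ 2 = u :=
  (Circle.isQuotientCoveringMap_npow 2).surjective u

lemma circle_smul_div_conj (u : Circle) (z : ℂ) :
    (u • z) / conj (u • z) = ↑(u ^ 2) * (z / conj z) := by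
  have hu : (u : ℂ) / conj (u : ℂ) = ↑(u ^ 2) := by
    rw [← Circle.coe_inv_eq_conj, ← Circle.coe_div, div_inv_eq_mul, sq]
  rw [Circle.smul_def, smul_eq_mul, map_mul, mul_div_mul_comm, hu]

variable (ν : Measure ℂ) [SMulInvariantMeasure Circle ℂ ν]

-- Since `0 / 0 = 0`, the fibre of `z ↦ z / conj z` over a unit is a line through `0`, without `0`.
lemma ae_div_conj_ne_of_circle_invariant [SFinite ν] (u : Circle) :
    ∀ᵐ z : ℂ ∂ν, z / conj z ≠ u := by
  have fiber_eq (v : Circle) : ν {z : ℂ | z / conj z = v} = ν {z : ℂ | z / conj z = u} := by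
    obtain ⟨w, hw⟩ := exists_circle_sq_eq (u / v)
    rw [← measure_preimage_smul ν w {z : ℂ | z / conj z = u}]
    congr 1
    ext z
    rw [Set.mem_preimage, Set.mem_ofPred_eq, Set.mem_ofPred_eq, circle_smul_div_conj,
      ← mul_right_inj' (w ^ 2).coe_ne_zero, ← Circle.coe_mul, hw, div_mul_cancel]
  have countable_charged : {v : Circle | 0 < ν {z : ℂ | z / conj z = v}}.Countable :=
    (Measure.countable_meas_level_set_pos (μ := ν) (g := fun z : ℂ => z / conj z)
      (by fun_prop)).preimage Circle.coe_injective
  by_contra h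
  have charged : 0 < ν {z : ℂ | z / conj z = u} := by
    simpa [ae_iff, pos_iff_ne_zero] using h
  have := uncountable_circle
  exact Set.not_countable_univ
    (countable_charged.mono fun v _ => charged.trans_eq (fiber_eq v).symm)

lemma ae_re_ne_zero_of_circle_invariant [SFinite ν] : ∀ᵐ z ∂ν, z ≠ 0 → z.re ≠ 0 := by
  filter_upwards [ae_div_conj_ne_of_circle_invariant ν (-1)] with z hz hz0 hre
  have hconj : conj z = -z := Complex.ext (by simp [hre]) (by simp)
  exact hz (by rw [hconj, div_neg, div_self hz0]; simp)

lemma ae_im_ne_zero_of_circle_invariant [SFinite ν] : ∀ᵐ z ∂ν, z ≠ 0 → z.im ≠ 0 := by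
  filter_upwards [ae_div_conj_ne_of_circle_invariant ν 1] with z hz hz0 him
  exact hz (by rw [Complex.conj_eq_iff_im.mpr him, div_self hz0, Circle.coe_one])

lemma measure_re_neg_eq_re_pos : ν {z | z.re < 0} = ν {z | 0 < z.re} := by
  rw [← measure_preimage_smul ν (-1 : Circle) {z | 0 < z.re}]
  congr! 2 with z
  simp [Circle.smul_def]

lemma measure_fourth_quadrant_eq_first :
    ν {z | 0 < z.re ∧ z.im < 0} = ν {z | 0 < z.re ∧ 0 < z.im} := by
  rw [← measure_preimage_smul ν (Circle.exp (π / 2)) {z | 0 < z.re ∧ 0 < z.im}]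
  congr! 2 with z
  simp [Circle.smul_def, Complex.exp_pi_div_two_mul_I, and_comm]

lemma two_mul_measure_re_pos [SFinite ν] : 2 * ν {z | 0 < z.re} = ν {0}ᶜ := by
  have hpos : ν ({0}ᶜ ∩ {z | 0 < z.re}) = ν {z | 0 < z.re} := by
    congr 1
    exact Set.inter_eq_right.mpr fun z hre hz0 => hre.ne' (congrArg Complex.re hz0)
  have hneg : ν ({0}ᶜ \ {z | 0 < z.re}) = ν {z | z.re < 0} := by
    refine measure_congr (eventuallyEq_set.mpr ?_)
    filter_upwards [ae_re_ne_zero_of_circle_invariant ν] with z hz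
    refine ⟨fun ⟨hz0, hre⟩ => (not_lt.mp hre).lt_of_ne (hz hz0), fun hre => ⟨?_, hre.not_gt⟩⟩
    rintro rfl
    exact hre.ne rfl
  rw [← measure_inter_add_sdiff {0}ᶜ (measurableSet_lt measurable_const Complex.measurable_re),
    hpos, hneg, measure_re_neg_eq_re_pos, two_mul]

lemma two_mul_measure_first_quadrant [SFinite ν] :
    2 * ν {z | 0 < z.re ∧ 0 < z.im} = ν {z | 0 < z.re} := by
  have hneg : ν ({z | 0 < z.re} \ {z | 0 < z.im}) = ν {z | 0 < z.re ∧ z.im < 0} := by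
    refine measure_congr (eventuallyEq_set.mpr ?_)
    filter_upwards [ae_im_ne_zero_of_circle_invariant ν] with z hz
    refine and_congr_right fun hre => ⟨fun him => (not_lt.mp him).lt_of_ne (hz ?_), lt_asymm⟩
    rintro rfl
    exact lt_irrefl (0 : ℝ) hre
  rw [← measure_inter_add_sdiff {z : ℂ | 0 < z.re}
    (measurableSet_lt measurable_const Complex.measurable_im), hneg,
    measure_fourth_quadrant_eq_first, two_mul, Set.ofPred_and]

lemma measure_first_quadrant_eq_quarter [IsProbabilityMeasure ν] (h0 : ν {0} = 0) :
    ν {z | 0 < z.re ∧ 0 < z.im} = 1 / 4 := by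
  have hfour : 4 * ν {z | 0 < z.re ∧ 0 < z.im} = 1 := by
    calc 4 * ν {z | 0 < z.re ∧ 0 < z.im}
        = 2 * (2 * ν {z | 0 < z.re ∧ 0 < z.im}) := by rw [← mul_assoc]; norm_num
      _ = ν {0}ᶜ := by rw [two_mul_measure_first_quadrant, two_mul_measure_re_pos]
      _ = 1 := (prob_compl_eq_one_iff (measurableSet_singleton 0)).mpr h0
  rw [ENNReal.eq_div_iff (by norm_num) (by norm_num), hfour]

end CircleInvariant

section PlaneRotation

variable {n : Type*} [DecidableEq n] {i j : n}

/-- The matrix acting on the `(i, j)` coordinate plane, read as `ℂ` by sending the row vector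
`x` to `x i + x j * I`, as multiplication by `z`, and as the identity on the other coordinates. -/
def planeMul (i j : n) (z : ℂ) : Matrix n n ℝ :=
  1 + (z.re - 1) • (Matrix.single i i 1 + Matrix.single j j 1) +
    z.im • (Matrix.single i j 1 - Matrix.single j i 1)

lemma planeMul_one : planeMul i j 1 = 1 := by
  simp [planeMul]

lemma planeMul_transpose (z : ℂ) : (planeMul i j z).transpose = planeMul i j (conj z) := by
  simp only [planeMul, Matrix.transpose_add, Matrix.transpose_sub, Matrix.transpose_smul,
    Matrix.transpose_single, Matrix.transpose_one, Complex.conj_re, Complex.conj_im]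
  module

variable [Fintype n]

lemma mul_planeMul_apply_left (h : i ≠ j) (M : Matrix n n ℝ) (z : ℂ) (p : n) :
    (M * planeMul i j z) p i = M p i * z.re - M p j * z.im := by
  simp only [planeMul, Matrix.mul_add, Matrix.mul_sub, Matrix.mul_smul, mul_one, Matrix.add_apply,
    Matrix.sub_apply, Matrix.smul_apply, smul_eq_mul, Matrix.mul_single_apply_same,
    Matrix.mul_single_apply_of_ne _ _ _ _ _ h]
  ring

lemma mul_planeMul_apply_right (h : i ≠ j) (M : Matrix n n ℝ) (z : ℂ) (p : n) :
    (M * planeMul i j z) p j = M p i * z.im + M p j * z.re := by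
  simp only [planeMul, Matrix.mul_add, Matrix.mul_sub, Matrix.mul_smul, mul_one, Matrix.add_apply,
    Matrix.sub_apply, Matrix.smul_apply, smul_eq_mul, Matrix.mul_single_apply_same,
    Matrix.mul_single_apply_of_ne _ _ _ _ _ h.symm]
  ring

lemma planeMul_mul (h : i ≠ j) (z w : ℂ) :
    planeMul i j (z * w) = planeMul i j z * planeMul i j w := by
  let P : Matrix n n ℝ := Matrix.single i i 1 + Matrix.single j j 1
  let K : Matrix n n ℝ := Matrix.single i j 1 - Matrix.single j i 1
  have hPP : P * P = P := by simp [P, mul_add, add_mul, h, h.symm]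
  have hPK : P * K = K := by simp [P, K, add_mul, mul_sub, h, h.symm]
  have hKP : K * P = K := by simp [P, K, mul_add, sub_mul, h, h.symm, ← sub_eq_neg_add]
  have hKK : K * K = -P := by simp [P, K, mul_sub, sub_mul, h, h.symm, ← sub_eq_add_neg]
  change 1 + ((z * w).re - 1) • P + (z * w).im • K =
    (1 + (z.re - 1) • P + z.im • K) * (1 + (w.re - 1) • P + w.im • K)
  simp only [mul_add, add_mul, one_mul, mul_one, smul_mul_assoc, mul_smul_comm, hPP, hPK, hKP,
    hKK, Complex.mul_re, Complex.mul_im]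
  module

lemma planeMul_mem_orthogonalGroup (h : i ≠ j) (u : Circle) :
    planeMul i j u ∈ Matrix.orthogonalGroup n ℝ := by
  rw [Matrix.mem_orthogonalGroup_iff, planeMul_transpose, ← planeMul_mul h,
    ← Circle.coe_inv_eq_conj, ← Circle.coe_mul, mul_inv_cancel, Circle.coe_one, planeMul_one]

-- `u` has a square root on the circle, so the determinant is a square, not `-1`.
lemma det_planeMul (h : i ≠ j) (u : Circle) : (planeMul i j u).det = 1 := by
  obtain ⟨w, rfl⟩ := exists_circle_sq_eq u
  rw [sq, Circle.coe_mul, planeMul_mul h, Matrix.det_mul]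
  exact Unitary.mul_star_self_of_mem (Matrix.det_of_mem_unitary (planeMul_mem_orthogonalGroup h w))

/-- Rotation of the `(i, j)` coordinate plane by the angle of the unit complex number `u`, for the
action of matrices on row vectors. -/
def planeRotation (h : i ≠ j) (u : Circle) : Matrix.specialOrthogonalGroup n ℝ :=
  ⟨planeMul i j u, Matrix.mem_specialOrthogonalGroup_iff.mpr
    ⟨planeMul_mem_orthogonalGroup h u, det_planeMul h u⟩⟩

end PlaneRotation

section SpecialOrthogonalGroup

variable {n : Type*} [Fintype n] [DecidableEq n] {i j : n}

/-- The entries of `R` in row `p` and columns `i` and `j`, as the complex number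
`R p i + R p j * I`. -/
def complexEntry (p i j : n) (R : Matrix.specialOrthogonalGroup n ℝ) : ℂ :=
  ⟨R.1 p i, R.1 p j⟩

lemma complexEntry_mul_planeRotation (h : i ≠ j) (p : n)
    (R : Matrix.specialOrthogonalGroup n ℝ) (u : Circle) :
    complexEntry p i j (R * planeRotation h u) = u • complexEntry p i j R := by
  rw [Circle.smul_def, smul_eq_mul, mul_comm]
  exact Complex.ext (mul_planeMul_apply_left h _ _ p)
    ((mul_planeMul_apply_right h _ _ p).trans (by simp [complexEntry]))

lemma measurable_specialOrthogonalGroup_apply (p i : n) :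
    Measurable fun R : Matrix.specialOrthogonalGroup n ℝ => R.1 p i :=
  (measurable_pi_apply i).comp ((measurable_pi_apply p).comp measurable_subtype_coe)

lemma measurable_complexEntry (p i j : n) : Measurable (complexEntry p i j) :=
  Complex.measurableEquivRealProd.symm.measurable.comp
    ((measurable_specialOrthogonalGroup_apply p i).prodMk
      (measurable_specialOrthogonalGroup_apply p j))

lemma measurable_specialOrthogonalGroup_mul_const (R₀ : Matrix.specialOrthogonalGroup n ℝ) :
    Measurable fun R : Matrix.specialOrthogonalGroup n ℝ => R * R₀ := by
  refine Measurable.subtype_mk (measurable_pi_lambda _ fun p => measurable_pi_lambda _ fun i => ?_)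
  simp only [Matrix.mul_apply]
  exact Finset.measurable_sum _ fun k _ =>
    (measurable_specialOrthogonalGroup_apply p k).mul_const _

variable (μ : Measure (Matrix.specialOrthogonalGroup n ℝ)) [μ.IsMulRightInvariant]

lemma circle_invariant_map_complexEntry (h : i ≠ j) (p : n) :
    SMulInvariantMeasure Circle ℂ (μ.map (complexEntry p i j)) where
  measure_preimage_smul u s hs := by
    have hentry := measurable_complexEntry p i j
    have hrot := measurable_specialOrthogonalGroup_mul_const (planeRotation h u)
    rw [Measure.map_apply hentry (hs.preimage (measurable_const_smul u)),
      Measure.map_apply hentry hs]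
    conv_rhs => rw [← map_mul_right_eq_self μ (planeRotation h u)]
    rw [Measure.map_apply hrot (hs.preimage hentry)]
    congr 1
    ext R
    simp only [Set.mem_preimage, complexEntry_mul_planeRotation]

lemma ae_entry_ne_zero [SFinite μ] (p i : n) :
    ∀ᵐ R : Matrix.specialOrthogonalGroup n ℝ ∂μ, R.1 p i ≠ 0 := by
  have row_zero_of_entry_zero : ∀ᵐ R : Matrix.specialOrthogonalGroup n ℝ ∂μ,
      ∀ j, R.1 p i = 0 → R.1 p j = 0 := by
    refine ae_all_iff.mpr fun j => ?_
    obtain rfl | h := eq_or_ne i j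
    · exact .of_forall fun _ => id
    have := circle_invariant_map_complexEntry μ h p
    filter_upwards [ae_of_ae_map (measurable_complexEntry p i j).aemeasurable
      (ae_re_ne_zero_of_circle_invariant (μ.map (complexEntry p i j)))] with R hR hi
    exact congrArg Complex.im (not_imp_not.mp hR hi)
  filter_upwards [row_zero_of_entry_zero] with R hrow hi
  have hdet : R.1.det = 1 := (Matrix.mem_specialOrthogonalGroup_iff.mp R.2).2
  exact one_ne_zero (hdet.symm.trans (Matrix.det_eq_zero_of_row_eq_zero p fun j => hrow j hi))

theorem haar_measure_quarter_general [IsProbabilityMeasure μ] (h : i ≠ j) (p : n) :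
    μ {R | 0 < R.1 p i ∧ R.1 p j < 0} = 1 / 4 ∧ μ {R | 0 < R.1 p i ∧ 0 < R.1 p j} = 1 / 4 := by
  have hentry := measurable_complexEntry p i j
  let ν := μ.map (complexEntry p i j)
  have : SMulInvariantMeasure Circle ℂ ν := circle_invariant_map_complexEntry μ h p
  have : IsProbabilityMeasure ν := Measure.isProbabilityMeasure_map hentry.aemeasurable
  have origin_null : ν {0} = 0 := by
    rw [Measure.map_apply hentry (measurableSet_singleton 0)]
    exact measure_mono_null (fun R hR => not_not.mpr (congrArg Complex.re hR))
      (ae_iff.mp (ae_entry_ne_zero μ p i))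
  have first := measure_first_quadrant_eq_quarter ν origin_null
  have fourth := (measure_fourth_quadrant_eq_first ν).trans first
  rw [Measure.map_apply hentry (by measurability)] at first fourth
  exact ⟨fourth, first⟩

end SpecialOrthogonalGroup

lemma lastCoord_rot_single {d : ℕ} (hd : 0 < d) (R : SOd d) (i : Fin d) :
    lastCoord (rot R (EuclideanSpace.single i 1)) = R.1 ⟨d - 1, by omega⟩ i := by
  have single_eq : EuclideanSpace.equiv (Fin d) ℝ (EuclideanSpace.single i 1) = Pi.single i 1 := rfl
  simp [lastCoord, rot, rotAct, hd, single_eq]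

theorem haar_measure_quarter
    (d : ℕ) (hd : 2 ≤ d)
    (μ : Measure (SOd d)) [IsProbabilityMeasure μ]
    (hμleft : ∀ R₀ : SOd d, μ.map (fun R => R₀ * R) = μ)
    (hμright : ∀ R₀ : SOd d, μ.map (fun R => R * R₀) = μ) :
    μ {R : SOd d |
        0 < lastCoord (rot R (EuclideanSpace.single (⟨d - 1, by omega⟩ : Fin d) (1 : ℝ))) ∧
        lastCoord (rot R (EuclideanSpace.single (⟨d - 2, by omega⟩ : Fin d) (1 : ℝ))) < 0} =
      1 / 4 ∧
    μ {R : SOd d |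
        0 < lastCoord (rot R (EuclideanSpace.single (⟨d - 1, by omega⟩ : Fin d) (1 : ℝ))) ∧
        0 < lastCoord (rot R (EuclideanSpace.single (⟨d - 2, by omega⟩ : Fin d) (1 : ℝ)))} =
      1 / 4 := by
  have : μ.IsMulRightInvariant := ⟨hμright⟩
  simp only [lastCoord_rot_single (show 0 < d by omega)]
  exact haar_measure_quarter_general μ (Fin.ne_of_val_ne (by lia)) _
end
end

section
/- For every θ ∈ [0, π], it holds θ·cos(θ/2) + (π − θ)·sin(θ/2) ≤ (1 + π/2)·sin θ. -/
open Real

/-!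
The function `x ↦ 1 / sin x - 1 / x` increases on `(0, π)`: its derivative is nonnegative because
`x ^ 2 * cos x ≤ sin x ^ 2`, which in terms of `tan (x / 2)` follows from `x / 2 ≤ tan (x / 2)`.
Write `x / sin x = 1 + x * (1 / sin x - 1 / x)` and likewise for `y`. Replacing the last factor by
its value at `x + y` and adding gives `x / sin x + y / sin y ≤ 1 + (x + y) / sin (x + y)`. The
theorem is the case `x = θ / 2`, `y = (π - θ) / 2`, in which `sin (x + y) = 1`.
-/

theorem sq_mul_cos_le_sin_sq {x : ℝ} (hx : |x| ≤ 3 * π / 2) : x ^ 2 * cos x ≤ sin x ^ 2 := by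
  wlog hx₀ : 0 ≤ x
  · simpa using this (x := -x) (by rwa [abs_neg]) (by linarith)
  rcases le_or_gt (cos x) 0 with hcos | hcos
  · exact (mul_nonpos_of_nonneg_of_nonpos (sq_nonneg x) hcos).trans (sq_nonneg _)
  have hx_lt : x < π / 2 := by
    by_contra! h
    exact hcos.not_ge (cos_nonpos_of_pi_div_two_le_of_le h (by linarith [le_abs_self x]))
  set t := tan (x / 2)
  have hxt : x ≤ 2 * t := by linarith [le_tan (x := x / 2) (by linarith) (by linarith)]
  have hsin_eq : sin x = 2 * t / (1 + t ^ 2) := sin_eq_two_mul_tan_half_div_one_add_tan_half_sq x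
  have hcos_eq : cos x = (1 - t ^ 2) / (1 + t ^ 2) :=
    cos_eq_two_mul_tan_half_div_one_sub_tan_half_sq x (by linarith)
  calc x ^ 2 * cos x ≤ (2 * t) ^ 2 * cos x := by gcongr
    _ = (2 * t) ^ 2 * ((1 - t ^ 2) * (1 + t ^ 2)) / (1 + t ^ 2) ^ 2 := by
      rw [hcos_eq]; field_simp
    _ ≤ (2 * t) ^ 2 * 1 / (1 + t ^ 2) ^ 2 := by
      gcongr
      linarith [sq_nonneg (t ^ 2)]
    _ = sin x ^ 2 := by rw [hsin_eq, div_pow, mul_one]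

theorem hasDerivAt_one_div_sin_sub_one_div {x : ℝ} (hsin : sin x ≠ 0) :
    HasDerivAt (fun x ↦ 1 / sin x - 1 / x) (1 / x ^ 2 - cos x / sin x ^ 2) x := by
  have hx : x ≠ 0 := by
    rintro rfl
    exact hsin sin_zero
  simp only [one_div]
  exact (((hasDerivAt_sin x).fun_inv hsin).fun_sub (hasDerivAt_inv hx)).congr_deriv (by ring)

theorem monotoneOn_one_div_sin_sub_one_div :
    MonotoneOn (fun x ↦ 1 / sin x - 1 / x) (Set.Ioo 0 π) := by
  have hderiv (x : ℝ) (hx : x ∈ Set.Ioo 0 π) :=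
    hasDerivAt_one_div_sin_sub_one_div (sin_pos_of_mem_Ioo hx).ne'
  refine monotoneOn_of_hasDerivWithinAt_nonneg (convex_Ioo 0 π)
    (fun x hx ↦ (hderiv x hx).continuousAt.continuousWithinAt)
    (fun x hx ↦ (hderiv x (interior_subset hx)).hasDerivWithinAt) fun x hx ↦ ?_
  obtain ⟨hx₀, hxπ⟩ := interior_subset hx
  have hsin : 0 < sin x := sin_pos_of_pos_of_lt_pi hx₀ hxπ
  rw [sub_nonneg, div_le_div_iff₀ (by positivity) (by positivity), one_mul, mul_comm]
  exact sq_mul_cos_le_sin_sq (by rw [abs_of_pos hx₀]; linarith)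

theorem le_sin_mul_one_add_mul {x a : ℝ} (hx₀ : 0 ≤ x) (hxa : x ≤ a) (haπ : a < π) :
    x ≤ sin x * (1 + (1 / sin a - 1 / a) * x) := by
  rcases hx₀.eq_or_lt with rfl | hx_pos
  · rw [sin_zero, zero_mul]
  have hsin : 0 < sin x := sin_pos_of_pos_of_lt_pi hx_pos (hxa.trans_lt haπ)
  calc x = sin x * (1 + (1 / sin x - 1 / x) * x) := by field_simp; ring
    _ ≤ sin x * (1 + (1 / sin a - 1 / a) * x) := by
      gcongr sin x * (1 + ?_ * x)
      exact monotoneOn_one_div_sin_sub_one_div ⟨hx_pos, hxa.trans_lt haπ⟩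
        ⟨hx_pos.trans_le hxa, haπ⟩ hxa

theorem mul_sin_add_mul_sin_le {x y : ℝ} (hx : 0 ≤ x) (hy : 0 ≤ y) (hxy : x + y < π) :
    x * sin y + y * sin x ≤ (1 + (x + y) / sin (x + y)) * (sin x * sin y) := by
  rcases (add_nonneg hx hy).eq_or_lt with hsum | hsum
  · obtain ⟨rfl, rfl⟩ := (add_eq_zero_iff_of_nonneg hx hy).mp hsum.symm
    simp
  have hsin_x : 0 ≤ sin x := sin_nonneg_of_nonneg_of_le_pi hx (by linarith)
  have hsin_y : 0 ≤ sin y := sin_nonneg_of_nonneg_of_le_pi hy (by linarith)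
  set k := 1 / sin (x + y) - 1 / (x + y) with hk
  calc x * sin y + y * sin x
      ≤ sin x * (1 + k * x) * sin y + sin y * (1 + k * y) * sin x := by
        gcongr
        · exact le_sin_mul_one_add_mul hx (by linarith) hxy
        · exact le_sin_mul_one_add_mul hy (by linarith) hxy
    _ = (2 + k * (x + y)) * (sin x * sin y) := by ring
    _ = (1 + (x + y) / sin (x + y)) * (sin x * sin y) := by
      rw [hk, sub_mul, one_div_mul_cancel hsum.ne']
      ring

theorem trig_inequality_jump_constant :
    ∀ θ ∈ Set.Icc (0 : ℝ) π,
      θ * Real.cos (θ / 2) + (π - θ) * Real.sin (θ / 2) ≤ (1 + π / 2) * Real.sin θ := by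
  rintro θ ⟨hθ₀, hθπ⟩
  have hsin_double : sin θ = 2 * sin (θ / 2) * cos (θ / 2) := by
    rw [← sin_two_mul, mul_div_cancel₀ θ two_ne_zero]
  have hhalf := mul_sin_add_mul_sin_le (x := θ / 2) (y := π / 2 - θ / 2)
    (by linarith) (by linarith) (by linarith [pi_pos])
  rw [add_sub_cancel, sin_pi_div_two, div_one, sin_pi_div_two_sub] at hhalf
  rw [hsin_double]
  linarith
end

section
/- Let d ≥ 2, N ≥ 1, let Ω ⊆ ℝ^N be a Lebesgue-measurable set and let Q : Ω → ℝ^{d×d} be a Lebesgue-measurable matrix-valued map such that for every x ∈ Ω there exists a unit vector v ∈ S^{d-1} with Q(x) = v ⊗ v. Then there exists a Lebesgue-measurable map n : Ω → S^{d-1} with Q(x) = n(x) ⊗ n(x) for every x ∈ Ω. -/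
/-!
STATEMENT 19: measurable selection of an orientation: a measurable map Q on a
Lebesgue-measurable set Ω ⊆ ℝ^N whose values are rank-one projections v⊗v (v a unit
vector) admits a measurable unit-vector field n with Q = n⊗n on Ω. This is the
measurable backbone of the lifting Theorem 1.2 of the paper.
-/

noncomputable section
open MeasureTheory

/-!
On the chart `v k ≠ 0` of projective space the orientation can be fixed by asking that the `k`-th
coordinate be positive: the vector so normalized is the `k`-th column of `v ⊗ v̄` divided by the
square root of its diagonal entry, hence depends measurably on `v ⊗ v̄`. These charts form a finite
measurable cover, and measurable selections given on the pieces of such a cover glue.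
-/

open Matrix

theorem exists_measurable_forall_of_iUnion_eq_univ {ι α β : Type*} [Countable ι]
    [MeasurableSpace α] [MeasurableSpace β] {s : ι → Set α} {g : ι → α → β} {P : α → β → Prop}
    (hs : ∀ i, MeasurableSet (s i)) (hcover : ⋃ i, s i = Set.univ) (hg : ∀ i, Measurable (g i))
    (hP : ∀ i, ∀ x ∈ s i, P x (g i x)) :
    ∃ f : α → β, Measurable f ∧ ∀ x, P x (f x) := by
  classical
  rcases isEmpty_or_nonempty α with _ | ⟨⟨x₀⟩⟩
  · exact ⟨isEmptyElim, measurable_of_empty _, isEmptyElim⟩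
  have hmem : ∀ x, ∃ i, x ∈ s i := Set.iUnion_eq_univ_iff.mp hcover
  have : Nonempty ι := (hmem x₀).nonempty
  obtain ⟨e, he⟩ := exists_surjective_nat ι
  have hmem_e : ∀ x, ∃ m, x ∈ s (e m) := fun x => he.exists.mp (hmem x)
  exact ⟨fun x => g (e (Nat.find (hmem_e x))) x,
    Measurable.find (p := fun m x => x ∈ s (e m)) (fun m => hg (e m)) (fun m => hs (e m)) hmem_e,
    fun x => hP _ x (Nat.find_spec (hmem_e x))⟩

theorem vecMulVec_smul_star_smul_of_mul_star_eq_one {ι R : Type*} [CommSemiring R] [StarRing R]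
    {c : R} (hc : c * star c = 1) (v : ι → R) :
    vecMulVec (c • v) (star (c • v)) = vecMulVec v (star v) := by
  rw [star_smul, smul_vecMulVec, vecMulVec_smul, smul_smul, hc, one_smul]

section NormalizedColumn

variable {ι 𝕜 : Type*} [RCLike 𝕜]

/-- The `k`-th column of `A` divided by `√A k k`. On `A = v ⊗ v̄` with `v k ≠ 0` it is the
unit-modulus multiple of `v` whose `k`-th coordinate is positive; it is `0` by the convention
`x / 0 = 0` when the real part of `A k k` is not positive. -/
def normalizedColumn (A : Matrix ι ι 𝕜) (k : ι) : EuclideanSpace 𝕜 ι :=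
  WithLp.toLp 2 fun i => A i k / (√(RCLike.re (A k k)) : ℝ)

theorem measurable_normalizedColumn {α : Type*} [MeasurableSpace α] {Q : α → Matrix ι ι 𝕜}
    (hQ : ∀ i j, Measurable fun x => Q x i j) (k : ι) :
    Measurable fun x => normalizedColumn (Q x) k := by
  have hsqrt : Measurable fun x => ((√(RCLike.re (Q x k k)) : ℝ) : 𝕜) :=
    RCLike.measurable_ofReal.comp (RCLike.measurable_re.comp (hQ k k)).sqrt
  exact (WithLp.measurable_toLp 2 _).comp (measurable_pi_lambda _ fun i => (hQ i k).div hsqrt)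

theorem normalizedColumn_vecMulVec_star (v : EuclideanSpace 𝕜 ι) (k : ι) :
    normalizedColumn (vecMulVec v (star v)) k = (star (v k) / (‖v k‖ : 𝕜)) • v := by
  have hdiag : RCLike.re (v k * star (v k)) = ‖v k‖ ^ 2 := by
    rw [RCLike.star_def, RCLike.mul_conj]
    norm_cast
  ext i
  simp only [normalizedColumn, vecMulVec_apply, Pi.star_apply, hdiag,
    Real.sqrt_sq (norm_nonneg _), PiLp.smul_apply, smul_eq_mul]
  ring

theorem norm_star_div_norm {z : 𝕜} (hz : z ≠ 0) : ‖star z / (‖z‖ : 𝕜)‖ = 1 := by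
  rw [norm_div, norm_star, RCLike.norm_ofReal, abs_norm, div_self (norm_ne_zero_iff.mpr hz)]

theorem norm_normalizedColumn_vecMulVec_star [Fintype ι] (v : EuclideanSpace 𝕜 ι) {k : ι}
    (hk : v k ≠ 0) : ‖normalizedColumn (vecMulVec v (star v)) k‖ = ‖v‖ := by
  rw [normalizedColumn_vecMulVec_star, norm_smul, norm_star_div_norm hk, one_mul]

theorem vecMulVec_normalizedColumn_star_normalizedColumn (v : EuclideanSpace 𝕜 ι) {k : ι}
    (hk : v k ≠ 0) :
    vecMulVec (normalizedColumn (vecMulVec v (star v)) k)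
      (star (normalizedColumn (vecMulVec v (star v)) k)) = vecMulVec v (star v) := by
  rw [normalizedColumn_vecMulVec_star, WithLp.ofLp_smul]
  refine vecMulVec_smul_star_smul_of_mul_star_eq_one ?_ v
  have hnorm := norm_star_div_norm hk
  rw [RCLike.star_def, RCLike.mul_conj, ← RCLike.star_def, hnorm, RCLike.ofReal_one, one_pow]

end NormalizedColumn

theorem measurable_orientation_selection_general {α ι 𝕜 : Type*} [MeasurableSpace α] [Fintype ι]
    [RCLike 𝕜] {Q : α → Matrix ι ι 𝕜} (hQ : ∀ i j, Measurable fun x => Q x i j)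
    (hQval : ∀ x, ∃ v : EuclideanSpace 𝕜 ι, ‖v‖ = 1 ∧ Q x = vecMulVec v (star v)) :
    ∃ n : α → EuclideanSpace 𝕜 ι, Measurable n ∧
      ∀ x, ‖n x‖ = 1 ∧ Q x = vecMulVec (n x) (star (n x)) := by
  have hdiag {x : α} {v : EuclideanSpace 𝕜 ι} (hQv : Q x = vecMulVec v (star v)) (k : ι) :
      Q x k k ≠ 0 ↔ v k ≠ 0 := by
    simp [hQv, vecMulVec_apply]
  refine exists_measurable_forall_of_iUnion_eq_univ (s := fun k => {x | Q x k k ≠ 0})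
    (g := fun k x => normalizedColumn (Q x) k)
    (P := fun x w => ‖w‖ = 1 ∧ Q x = vecMulVec w (star w))
    (fun k => (hQ k k (measurableSet_singleton 0)).compl) ?cover
    (measurable_normalizedColumn hQ) ?select
  case cover =>
    refine Set.iUnion_eq_univ_iff.mpr fun x => ?_
    obtain ⟨v, hv, hQv⟩ := hQval x
    obtain ⟨k, hk⟩ : ∃ k, v k ≠ 0 := by
      by_contra! h
      exact one_ne_zero (hv.symm.trans (norm_eq_zero.mpr (PiLp.ext h)))
    exact ⟨k, (hdiag hQv k).mpr hk⟩
  case select =>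
    intro k x hx
    obtain ⟨v, hv, hQv⟩ := hQval x
    have hk : v k ≠ 0 := (hdiag hQv k).mp hx
    rw [hQv]
    exact ⟨(norm_normalizedColumn_vecMulVec_star v hk).trans hv,
      (vecMulVec_normalizedColumn_star_normalizedColumn v hk).symm⟩

theorem measurable_orientation_selection
    (N d : ℕ) (hN : 1 ≤ N) (hd : 2 ≤ d)
    (Ω : Set (EuclideanSpace ℝ (Fin N))) (hΩ : MeasurableSet Ω)
    (Q : Ω → Fin d → Fin d → ℝ) (hQ : Measurable Q)
    (hQval : ∀ x : Ω, ∃ v : EuclideanSpace ℝ (Fin d), ‖v‖ = 1 ∧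
      ∀ i j, Q x i j = v i * v j) :
    ∃ n : Ω → EuclideanSpace ℝ (Fin d), Measurable n ∧
      ∀ x : Ω, ‖n x‖ = 1 ∧ ∀ i j, Q x i j = n x i * n x j := by
  simpa [← Matrix.ext_iff, vecMulVec_apply] using
    measurable_orientation_selection_general (𝕜 := ℝ) (Q := fun x => Matrix.of (Q x))
      (fun i j => measurable_pi_iff.mp (measurable_pi_iff.mp hQ i) j)
      (by simpa [← Matrix.ext_iff, vecMulVec_apply] using hQval)
end
end
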